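/- arXiv:2603.08449 — 4 statements merged into one kernel-verified Lean document; each statement's English description precedes it below -/
import Mathlib

section
/- Let K ∈ L¹(ℝ, ℂ) and let λ ∈ ℂ with λ ≠ 0 and λ ≠ K̂(ξ) for every ξ ∈ ℝ, where K̂(ξ) = ∫_ℝ K(t) e^{−itξ} dt. Then there exists a function A ∈ L¹(ℝ, ℂ) such that λ·A(x) − (K ⋆ A)(x) = K(x) for almost every x ∈ ℝ, where (K ⋆ A)(x) = ∫_ℝ K(s) A(x − s) ds is the usual convolution. -/
open MeasureTheory

lemma wl_char (χ : ℝ → ℂ) (hc : Continuous χ) (h0 : χ 0 = 1)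
    (hadd : ∀ s t, χ (s + t) = χ s * χ t) (M : ℝ) (hM : ∀ t, ‖χ t‖ ≤ M) :
    ∃ ξ : ℝ, ∀ t : ℝ, χ t = Complex.exp (-(Complex.I * (t : ℂ) * (ξ : ℂ))) := by
  set F : ℝ → ℂ := fun x => ∫ s in (0 : ℝ)..x, χ s with hF
  have hFd : ∀ x, HasDerivAt F (χ x) x := fun x =>
    intervalIntegral.integral_hasDerivAt_right (hc.intervalIntegrable _ _)
      (hc.stronglyMeasurableAtFilter _ _) hc.continuousAt
  obtain ⟨a, ha⟩ : ∃ a, F a ≠ 0 := by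
    by_contra! h
    have h1 : F = fun _ => 0 := funext h
    have h2 := hFd 0
    rw [h1, h0] at h2
    exact one_ne_zero (h2.unique (hasDerivAt_const _ _))
  have hχ : ∀ t, χ t = (F (t + a) - F t) / F a := by
    intro t
    rw [eq_div_iff ha]
    have h1 : F (t + a) - F t = ∫ s in t..(t + a), χ s :=
      intervalIntegral.integral_interval_sub_left (hc.intervalIntegrable _ _)
        (hc.intervalIntegrable _ _)
    rw [h1, hF, ← intervalIntegral.integral_const_mul]
    simp_rw [← hadd]
    rw [intervalIntegral.integral_comp_add_left (fun s => χ s) t, add_zero]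
  obtain ⟨d, hd⟩ : ∃ d, HasDerivAt χ d 0 := by
    have h1 : HasDerivAt (fun t => (F (t + a) - F t) / F a) ((χ (0 + a) - χ 0) / F a) 0 :=
      (((hFd (0 + a)).comp_add_const 0 a).sub (hFd 0)).div_const _
    exact ⟨_, by rwa [← funext hχ] at h1⟩
  have hd' : ∀ t, HasDerivAt χ (χ t * d) t := by
    intro t
    have h1 : HasDerivAt (fun s => χ t * χ (s - t)) (χ t * d) t := by
      have h2 : HasDerivAt χ d (t - t) := by rwa [sub_self]
      exact (h2.comp_sub_const t t).const_mul _
    convert h1 using 1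
    funext s
    rw [← hadd]; congr 1; ring
  have hexp : ∀ t : ℝ, χ t = Complex.exp (d * t) := by
    have h1 : ∀ t : ℝ, HasDerivAt (fun t : ℝ => χ t * Complex.exp (-(d * t))) 0 t := by
      intro t
      have h2 : HasDerivAt (fun t : ℝ => -(d * (t : ℂ))) (-(d * 1)) t :=
        ((Complex.ofRealCLM.hasDerivAt (x := t)).const_mul d).neg
      have h3 := (hd' t).mul h2.cexp
      have h4 : χ t * d * Complex.exp (-(d * t)) + χ t * (Complex.exp (-(d * t)) * -(d * 1)) = 0 := by
        ring
      rw [h4] at h3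
      exact h3
    intro t
    have h2 := is_const_of_deriv_eq_zero (fun t => (h1 t).differentiableAt)
      (fun t => (h1 t).deriv) t 0
    simp only [h0, Complex.ofReal_zero, mul_zero, neg_zero, Complex.exp_zero, mul_one,
      Complex.exp_neg] at h2
    field_simp at h2
    exact h2
  have hre : d.re = 0 := by
    by_contra h
    have h1 := hM ((M + 1) / d.re)
    rw [hexp, Complex.norm_exp] at h1
    have h2 : (d * ((M + 1) / d.re : ℝ)).re = M + 1 := by
      rw [Complex.re_mul_ofReal]; field_simp
    rw [h2] at h1
    have := Real.add_one_le_exp (M + 1)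
    linarith
  refine ⟨-d.im, fun t => ?_⟩
  rw [hexp]
  congr 1
  apply Complex.ext <;> simp [hre]
  ring

lemma wl_unit {R : Type*} [NormedRing R] [NormedAlgebra ℂ R] [CompleteSpace R]
    (T : ℝ → R) (hT0 : T 0 = 1) (hTadd : ∀ s t, T (s + t) = T s * T t)
    (M : ℝ) (hM : ∀ t, ‖T t‖ ≤ M) (C : R) (hCT : ∀ t, C * T t = T t * C)
    (hcont : Continuous fun t => T t * C)
    (K : ℝ → ℂ) (hK : Integrable K) (hCC : C * C = ∫ t, K t • (T t * C))
    (l : ℂ) (hl0 : l ≠ 0)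
    (hl : ∀ ξ : ℝ, l ≠ ∫ t : ℝ, K t * Complex.exp (-(Complex.I * (t : ℂ) * (ξ : ℂ)))) :
    IsUnit (algebraMap ℂ R l - C) := by
  set S : Set R := insert C (Set.range T) with hS
  have hSS : S ⊆ S.centralizer := by
    have hTT : ∀ s t, T s * T t = T t * T s := fun s t => by rw [← hTadd, ← hTadd, add_comm]
    rintro x (rfl | ⟨t, rfl⟩) y (rfl | ⟨s, rfl⟩)
    · rfl
    · exact (hCT s).symm
    · exact hCT t
    · exact hTT _ _
  set B : Subalgebra ℂ R := Subalgebra.centralizer ℂ S.centralizer with hB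
  have hSB : S ⊆ B := Set.subset_centralizer_centralizer
  have hBc : IsClosed (B : Set R) := Set.isClosed_centralizer _
  have : CompleteSpace B := hBc.completeSpace_coe
  let _ : NormedCommRing B :=
    { (inferInstance : NormedRing B) with
      mul_comm := by
        rintro ⟨a, ha⟩ ⟨b, hb⟩
        apply Subtype.ext
        have hb' : b ∈ S.centralizer := Set.centralizer_subset hSS hb
        exact (ha b hb').symm }
  let C' : B := ⟨C, hSB (Or.inl rfl)⟩
  let T' : ℝ → B := fun t => ⟨T t, hSB (Or.inr ⟨t, rfl⟩)⟩
  by_contra hu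
  have hu' : ¬ IsUnit (algebraMap ℂ B l - C') := by
    intro h
    exact hu (h.map B.val)
  obtain ⟨φ, hφ⟩ := WeakDual.CharacterSpace.exists_apply_eq_zero hu'
  have hφC : φ C' = l := by
    rw [map_sub, AlgHomClass.commutes, sub_eq_zero] at hφ
    exact hφ.symm
  have hφc : Continuous φ := map_continuous φ
  have hTC : Continuous fun t => T' t * C' := by
    apply Continuous.subtype_mk hcont
  have hχc : Continuous fun t => φ (T' t) := by
    have : (fun t => φ (T' t)) = fun t => φ (T' t * C') / l := by
      funext t
      rw [map_mul, hφC, mul_div_cancel_right₀ _ hl0]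
    rw [this]
    exact (hφc.comp hTC).div_const _
  let φL : B →L[ℂ] ℂ := WeakDual.CharacterSpace.toCLM φ
  have hφL : ∀ b, φL b = φ b := fun b => rfl
  obtain ⟨ξ, hξ⟩ := wl_char (fun t => φ (T' t)) hχc
    (by
      have : T' 0 = 1 := Subtype.ext hT0
      simp [this])
    (by
      intro s t
      have : T' (s + t) = T' s * T' t := Subtype.ext (hTadd s t)
      simp [this])
    (‖φL‖ * M) (fun t => (φL.le_opNorm _).trans (by gcongr; exact hM t))
  apply hl ξ
  have hbd : ∀ t, ‖T' t * C'‖ ≤ M * ‖C'‖ := fun t =>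
    (norm_mul_le _ _).trans (by gcongr; exact hM t)
  have : SecondCountableTopologyEither ℝ B := ⟨Or.inl inferInstance⟩
  have hint : Integrable fun t => K t • (T' t * C') := by
    refine Integrable.mono' (hK.norm.mul_const (M * ‖C'‖))
      (hK.aestronglyMeasurable.smul hTC.aestronglyMeasurable) (Filter.Eventually.of_forall ?_)
    intro t
    rw [norm_smul]
    gcongr
    exact hbd t
  have hCC' : C' * C' = ∫ t, K t • (T' t * C') := by
    apply Subtype.ext
    have h1 : B.val.toLinearMap (∫ t, K t • (T' t * C')) = ∫ t, K t • (T t * C) := by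
      have := (B.toSubmodule.subtypeL).integral_comp_comm hint
      exact this.symm
    exact hCC.trans h1.symm
  have h2 : l * l = (∫ t, K t * φ (T' t)) * l := by
    calc l * l = φL (C' * C') := by rw [hφL, map_mul, hφC]
      _ = ∫ t, φL (K t • (T' t * C')) := by rw [hCC', φL.integral_comp_comm hint]
      _ = ∫ t, (K t * φ (T' t)) * l := by
          congr 1; funext t
          rw [map_smul, hφL, map_mul, hφC, smul_eq_mul, mul_assoc]
      _ = _ := integral_mul_const _ _
  have h3 := mul_right_cancel₀ hl0 h2
  simp_rw [← hξ]
  exact h3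

/-- translation on L¹ -/
noncomputable def wlTau (t : ℝ) : Lp ℂ 1 (volume : Measure ℝ) →L[ℂ] Lp ℂ 1 (volume : Measure ℝ) :=
  (Lp.compMeasurePreservingₗᵢ ℂ (fun x : ℝ => x - t)
    (measurePreserving_sub_right volume t)).toContinuousLinearMap

lemma wlTau_coe (t : ℝ) (g : Lp ℂ 1 (volume : Measure ℝ)) :
    wlTau t g =ᵐ[volume] fun x => g (x - t) :=
  Lp.coeFn_compMeasurePreserving g (measurePreserving_sub_right volume t)

lemma wlTau_norm (t : ℝ) (g : Lp ℂ 1 (volume : Measure ℝ)) : ‖wlTau t g‖ = ‖g‖ :=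
  Lp.norm_compMeasurePreserving g (measurePreserving_sub_right volume t)

lemma wlTau_zero : wlTau 0 = 1 := by
  ext1 g
  apply Lp.ext
  filter_upwards [wlTau_coe 0 g] with x hx
  simpa using hx

lemma wlTau_add (s t : ℝ) : wlTau (s + t) = wlTau s * wlTau t := by
  ext1 g
  apply Lp.ext
  have h := (measurePreserving_sub_right volume s).quasiMeasurePreserving.ae (wlTau_coe t g)
  filter_upwards [wlTau_coe (s + t) g, wlTau_coe s (wlTau t g), h] with x h1 h2 h3
  rw [h1]
  change _ = (wlTau s (wlTau t g)) x
  rw [h2, h3, sub_sub]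

lemma wlTau_cont (g : Lp ℂ 1 (volume : Measure ℝ)) : Continuous fun t => wlTau t g := by
  let G : C(ℝ, C(ℝ, ℝ)) := (ContinuousMap.mk (fun a : ℝ × ℝ ↦ a.2 - a.1) (by fun_prop)).curry
  exact (continuous_const (y := g)).compMeasurePreservingLp (g := G) G.continuous
    (fun t => measurePreserving_sub_right volume t) (by simp)

lemma wl_int (K : ℝ → ℂ) (hK : Integrable K) (g : Lp ℂ 1 (volume : Measure ℝ)) :
    Integrable fun t => K t • wlTau t g := by
  refine Integrable.mono' (hK.norm.mul_const ‖g‖)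
    (hK.aestronglyMeasurable.smul (wlTau_cont g).aestronglyMeasurable)
    (Filter.Eventually.of_forall ?_)
  intro t
  rw [norm_smul, wlTau_norm]

lemma wl_bound (K : ℝ → ℂ) (hK : Integrable K) (g : Lp ℂ 1 (volume : Measure ℝ)) :
    ‖∫ t, K t • wlTau t g‖ ≤ (∫ t, ‖K t‖) * ‖g‖ := by
  refine (norm_integral_le_integral_norm _).trans (le_of_eq ?_)
  simp_rw [norm_smul, wlTau_norm]
  exact integral_mul_const _ _

/-- convolution operator -/
noncomputable def wlConv (K : ℝ → ℂ) (hK : Integrable K) :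
    Lp ℂ 1 (volume : Measure ℝ) →L[ℂ] Lp ℂ 1 (volume : Measure ℝ) :=
  LinearMap.mkContinuous
    { toFun := fun g => ∫ t, K t • wlTau t g
      map_add' := by
        intro g h
        rw [← integral_add (wl_int K hK g) (wl_int K hK h)]
        simp
      map_smul' := by
        intro c g
        rw [RingHom.id_apply, ← integral_smul]
        congr 1; funext t
        rw [map_smul, smul_comm] }
    (∫ t, ‖K t‖) (fun g => wl_bound K hK g)

lemma wlConv_apply (K : ℝ → ℂ) (hK : Integrable K) (g : Lp ℂ 1 (volume : Measure ℝ)) :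
    wlConv K hK g = ∫ t, K t • wlTau t g := rfl

lemma wlConv_norm (K : ℝ → ℂ) (hK : Integrable K) : ‖wlConv K hK‖ ≤ ∫ t, ‖K t‖ :=
  LinearMap.mkContinuous_norm_le _ (by positivity) _

lemma wlConv_comm (K : ℝ → ℂ) (hK : Integrable K) (t : ℝ) :
    wlConv K hK * wlTau t = wlTau t * wlConv K hK := by
  ext1 g
  change wlConv K hK (wlTau t g) = wlTau t (wlConv K hK g)
  rw [wlConv_apply, wlConv_apply, ← (wlTau t).integral_comp_comm (wl_int K hK g)]
  congr 1; funext s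
  rw [map_smul]
  congr 1
  change (wlTau s * wlTau t) g = (wlTau t * wlTau s) g
  rw [← wlTau_add, ← wlTau_add, add_comm]

lemma wlTau_conv (K : ℝ → ℂ) (hK : Integrable K) (t : ℝ) :
    wlTau t * wlConv K hK = wlConv (fun s => K (s - t)) (hK.comp_sub_right t) := by
  ext1 g
  change wlTau t (wlConv K hK g) = _
  rw [wlConv_apply, wlConv_apply, ← (wlTau t).integral_comp_comm (wl_int K hK g)]
  rw [← integral_sub_right_eq_self (fun s => wlTau t (K s • wlTau s g)) t]
  congr 1; funext s
  rw [map_smul]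
  congr 1
  change (wlTau t * wlTau (s - t)) g = _
  rw [← wlTau_add, add_sub_cancel]

lemma wlConv_toLp (K : ℝ → ℂ) (hK : Integrable K) (s t : ℝ) :
    ‖wlTau s * wlConv K hK - wlTau t * wlConv K hK‖ ≤
      ‖wlTau s (hK.toL1 K) - wlTau t (hK.toL1 K)‖ := by
  have h1 : wlTau s * wlConv K hK - wlTau t * wlConv K hK =
      wlConv (fun x => K (x - s) - K (x - t))
        ((hK.comp_sub_right s).sub (hK.comp_sub_right t)) := by
    rw [wlTau_conv, wlTau_conv]
    ext1 g
    rw [sub_apply, wlConv_apply, wlConv_apply, wlConv_apply,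
      ← integral_sub (wl_int _ (hK.comp_sub_right s) g) (wl_int _ (hK.comp_sub_right t) g)]
    simp_rw [sub_smul]
  rw [h1]
  refine (wlConv_norm _ _).trans (le_of_eq ?_)
  rw [L1.norm_eq_integral_norm]
  apply integral_congr_ae
  have hq : ∀ r : ℝ, ∀ᵐ x : ℝ, (hK.toL1 K) (x - r) = K (x - r) := fun r =>
    (measurePreserving_sub_right volume r).quasiMeasurePreserving.ae hK.coeFn_toL1
  filter_upwards [hq s, hq t, wlTau_coe s (hK.toL1 K), wlTau_coe t (hK.toL1 K),
    Lp.coeFn_sub (wlTau s (hK.toL1 K)) (wlTau t (hK.toL1 K))] with x h1 h2 h3 h4 h5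
  rw [h5, Pi.sub_apply, h3, h4, h1, h2]

lemma wlTauConv_cont (K : ℝ → ℂ) (hK : Integrable K) :
    Continuous fun t => wlTau t * wlConv K hK := by
  rw [continuous_iff_continuousAt]
  intro t
  have h := (wlTau_cont (hK.toL1 K)).continuousAt (x := t)
  rw [ContinuousAt, tendsto_iff_norm_sub_tendsto_zero] at h ⊢
  exact squeeze_zero (fun _ => norm_nonneg _) (fun s => wlConv_toLp K hK s t) h

lemma wlConv_sq (K : ℝ → ℂ) (hK : Integrable K) :
    wlConv K hK * wlConv K hK = ∫ t, K t • (wlTau t * wlConv K hK) := by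
  have : SecondCountableTopologyEither ℝ
    (Lp ℂ 1 (volume : Measure ℝ) →L[ℂ] Lp ℂ 1 (volume : Measure ℝ)) := ⟨Or.inl inferInstance⟩
  have hint : Integrable fun t => K t • (wlTau t * wlConv K hK) := by
    refine Integrable.mono' (hK.norm.mul_const ‖wlConv K hK‖)
      (hK.aestronglyMeasurable.smul (wlTauConv_cont K hK).aestronglyMeasurable)
      (Filter.Eventually.of_forall ?_)
    intro t
    rw [norm_smul]
    gcongr
    refine ContinuousLinearMap.opNorm_le_bound _ (norm_nonneg _) fun g => ?_
    change ‖wlTau t (wlConv K hK g)‖ ≤ _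
    rw [wlTau_norm]
    exact ContinuousLinearMap.le_opNorm _ _
  ext1 g
  rw [ContinuousLinearMap.integral_apply hint]
  rfl

lemma wlConv_ae (K : ℝ → ℂ) (hK : Integrable K) (g : Lp ℂ 1 (volume : Measure ℝ)) :
    wlConv K hK g =ᵐ[volume] fun x => ∫ s, K s * g (x - s) := by
  have hg : Integrable g := L1.integrable_coeFn g
  have hp : Integrable (fun p : ℝ × ℝ => K p.2 * g (p.1 - p.2)) (volume.prod volume) :=
    hK.convolution_integrand (ContinuousLinearMap.mul ℂ ℂ) hg
  refine Integrable.ae_eq_of_forall_setIntegral_eq _ _ (L1.integrable_coeFn _)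
    hp.integral_prod_left ?_
  intro s hs hs'
  obtain ⟨L, hL⟩ : ∃ L : Lp ℂ 1 (volume : Measure ℝ) →L[ℝ] ℂ, ∀ f, L f = ∫ x in s, f x := by
    refine ⟨L1.integralCLM.comp (LpToLpRestrictCLM ℝ ℂ ℝ volume 1 s), fun f => ?_⟩
    rw [← integral_congr_ae (LpToLpRestrictCLM_coeFn ℝ s f), ← L1.integral_eq_integral,
      L1.integral_eq]
    rfl
  rw [← hL, wlConv_apply, ← L.integral_comp_comm (wl_int K hK g)]
  have hp' : Integrable (fun p : ℝ × ℝ => K p.2 * g (p.1 - p.2))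
      ((volume.restrict s).prod volume) := by
    have := hp.restrict (s := s ×ˢ Set.univ)
    rwa [← Measure.prod_restrict, Measure.restrict_univ] at this
  rw [integral_integral_swap hp']
  congr 1; funext t
  rw [hL]
  apply integral_congr_ae
  filter_upwards [ae_restrict_of_ae (wlTau_coe t g),
    ae_restrict_of_ae (Lp.coeFn_smul (K t) (wlTau t g))] with x hx hx'
  rw [hx', Pi.smul_apply, hx, smul_eq_mul]

/-- **Wiener's lemma.** Let `K ∈ L¹(ℝ, ℂ)` and `l ∈ ℂ` with `l ≠ 0` and
`l ≠ K̂(ξ)` for every `ξ ∈ ℝ`, where `K̂(ξ) = ∫ K(t) e^{−itξ} dt`. Then there is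
`A ∈ L¹(ℝ, ℂ)` with `l·A(x) − (K ⋆ A)(x) = K(x)` for almost every `x`. -/
theorem stmt2 (K : ℝ → ℂ) (hK : Integrable K) (l : ℂ) (hl0 : l ≠ 0)
    (hl : ∀ ξ : ℝ, l ≠ ∫ t : ℝ, K t * Complex.exp (-(Complex.I * (t : ℂ) * (ξ : ℂ)))) :
    ∃ A : ℝ → ℂ, Integrable A ∧
      ∀ᵐ x : ℝ, l * A x - (∫ s : ℝ, K s * A (x - s)) = K x := by
  have hu := wl_unit wlTau wlTau_zero wlTau_add 1
    (fun t => ContinuousLinearMap.opNorm_le_bound _ zero_le_one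
      fun g => by rw [wlTau_norm, one_mul])
    (wlConv K hK) (wlConv_comm K hK) (wlTauConv_cont K hK) K hK (wlConv_sq K hK) l hl0 hl
  obtain ⟨u, hu⟩ := hu
  let A : Lp ℂ 1 (volume : Measure ℝ) := (u⁻¹).val (hK.toL1 K)
  have hA : l • A - wlConv K hK A = hK.toL1 K := by
    have h1 : (u.val * (u⁻¹).val) (hK.toL1 K) = hK.toL1 K := by
      rw [Units.mul_inv]; rfl
    have h2 : u.val A = hK.toL1 K := h1
    rw [hu, Algebra.algebraMap_eq_smul_one] at h2
    exact h2
  refine ⟨A, L1.integrable_coeFn A, ?_⟩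
  have h3 := Lp.coeFn_sub (l • A) (wlConv K hK A)
  rw [hA] at h3
  filter_upwards [h3, Lp.coeFn_smul l A, wlConv_ae K hK A, hK.coeFn_toL1] with x h4 h5 h6 h7
  rw [← h6, ← h7, h4, Pi.sub_apply, h5, Pi.smul_apply, smul_eq_mul]
end

section
/- Let 1 ≤ p < ∞, a > −1, and let φ : (0,∞) → ℂ be measurable with ∫₀^∞ |φ(t)| t^{(a+1)/p − 1} dt < ∞. Let T be the bounded linear operator on L^p(ℝ, |x|^a) given by T f = H_φ f. Then the spectrum of T equals the closure in ℂ of the set { k̂_{a,p}(ξ) : ξ ∈ ℝ }, where k̂_{a,p}(ξ) = ∫₀^∞ φ(t) t^{(a+1)/p − 1 − iξ} dt. -/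
open MeasureTheory

/-- The Hausdorff operator `H_φ f(x) = ∫₀^∞ f(x/t) φ(t) t⁻¹ dt`. -/
noncomputable def Hphi (φ : ℝ → ℂ) (f : ℝ → ℂ) (x : ℝ) : ℂ :=
  ∫ t in Set.Ioi (0 : ℝ), f (x / t) * φ t / (t : ℂ)

/-- The weighted measure `|x|^a dx` on `ℝ`. -/
noncomputable def weightMeasure (a : ℝ) : Measure ℝ :=
  volume.withDensity fun x => ENNReal.ofReal (|x| ^ a)

/-- `k̂_{a,p}(ξ) = ∫₀^∞ φ(t) t^{c − 1 − iξ} dt` with `c = (a+1)/p`. -/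
noncomputable def khat (φ : ℝ → ℂ) (c : ℝ) (ξ : ℝ) : ℂ :=
  ∫ t in Set.Ioi (0 : ℝ), φ t * (t : ℂ) ^ ((c : ℂ) - 1 - Complex.I * (ξ : ℂ))

namespace HausSpec
open MeasureTheory Real Filter Topology
open scoped ENNReal

/-- normalized dilation -/
noncomputable def V (c s : ℝ) (f : ℝ → ℂ) (x : ℝ) : ℂ :=
  (Real.exp (-(c * s)) : ℂ) * f (x * Real.exp (-s))

/-- superposition of dilations -/
noncomputable def C (c : ℝ) (k : ℝ → ℂ) (f : ℝ → ℂ) (x : ℝ) : ℂ :=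
  ∫ s, k s * V c s f x

lemma setIntegral_exp (F : ℝ → ℂ) :
    ∫ t in Set.Ioi (0:ℝ), F t = ∫ s : ℝ, (Real.exp s : ℂ) * F (Real.exp s) := by
  have h := integral_image_eq_integral_abs_deriv_smul (s := Set.univ) (f := Real.exp)
    (f' := Real.exp) MeasurableSet.univ (fun x _ => (Real.hasDerivAt_exp x).hasDerivWithinAt)
    Real.exp_injective.injOn F
  rw [Set.image_univ, Real.range_exp] at h
  rw [h]
  simp [abs_of_pos (Real.exp_pos _)]

lemma integrable_exp (F : ℝ → ℝ) (hF : IntegrableOn F (Set.Ioi 0)) :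
    Integrable (fun s : ℝ => Real.exp s * F (Real.exp s)) := by
  have h := integrableOn_image_iff_integrableOn_abs_deriv_smul (s := Set.univ) (f := Real.exp)
    (f' := Real.exp) MeasurableSet.univ (fun x _ => (Real.hasDerivAt_exp x).hasDerivWithinAt)
    Real.exp_injective.injOn F
  rw [Set.image_univ, Real.range_exp] at h
  have := h.1 hF
  simpa [abs_of_pos (Real.exp_pos _)] using this

/-- the kernel -/
noncomputable def ker (φ : ℝ → ℂ) (c s : ℝ) : ℂ := (Real.exp (c * s) : ℂ) * φ (Real.exp s)

lemma ker_measurable {φ : ℝ → ℂ} (h : Measurable φ) (c : ℝ) : Measurable (ker φ c) := by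
  unfold ker; fun_prop

lemma ker_integrable {φ : ℝ → ℂ} (h : Measurable φ) (c : ℝ)
    (hφ : IntegrableOn (fun t => ‖φ t‖ * t ^ (c - 1)) (Set.Ioi (0 : ℝ))) :
    Integrable (ker φ c) := by
  refine (integrable_norm_iff (ker_measurable h c).aestronglyMeasurable).1 ?_
  refine (integrable_exp _ hφ).congr (Eventually.of_forall fun s => ?_)
  simp only [ker, norm_mul, Complex.norm_real, Real.norm_eq_abs, abs_of_pos (Real.exp_pos _)]
  rw [← Real.exp_mul, mul_left_comm, ← Real.exp_add, mul_comm]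
  congr 2; ring

lemma Hphi_eq (φ f : ℝ → ℂ) (c x : ℝ) : Hphi φ f x = C c (ker φ c) f x := by
  unfold Hphi C
  rw [setIntegral_exp]
  congr 1; ext s
  have h : (Real.exp (c*s) : ℂ) * (Real.exp (-(c*s)) : ℂ) = 1 := by
    rw [← Complex.ofReal_mul, ← Real.exp_add]; simp
  have h2 : (Real.exp s : ℂ) ≠ 0 := by exact_mod_cast (Real.exp_pos s).ne'
  unfold ker V
  rw [show x * Real.exp (-s) = x / Real.exp s by rw [Real.exp_neg]; rfl]
  field_simp
  linear_combination (-(φ (rexp s) * f (x / rexp s))) * h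

lemma khat_eq (φ : ℝ → ℂ) (c ξ : ℝ) :
    khat φ c ξ = ∫ s : ℝ, ker φ c s * Complex.exp (-(Complex.I * ξ * s)) := by
  unfold khat
  rw [setIntegral_exp]
  congr 1; ext s
  unfold ker
  rw [Complex.cpow_def_of_ne_zero (by exact_mod_cast (Real.exp_pos s).ne'),
    ← Complex.ofReal_log (Real.exp_pos s).le, Real.log_exp, Complex.ofReal_exp, Complex.ofReal_exp]
  rw [mul_left_comm, ← Complex.exp_add, mul_comm (Complex.exp _) (φ _), mul_assoc, ← Complex.exp_add]
  congr 2; push_cast; ring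

section meas
variable {μ : Measure ℝ} [SFinite μ]

lemma jensen {p : ℝ} (hp : 1 ≤ p) {k : ℝ → ℂ} (hk : Measurable k)
    (hki : Integrable k)
    {G : ℝ × ℝ → ℝ≥0∞} (hG : Measurable G) :
    ∫⁻ x, (∫⁻ s, ‖k s‖ₑ * G (x, s)) ^ p ∂μ ≤
      (∫⁻ s, ‖k s‖ₑ) ^ (p - 1) * ∫⁻ s, ‖k s‖ₑ * ∫⁻ x, G (x, s) ^ p ∂μ := by
  have hp0 : 0 < p := by linarith
  have hM : ∫⁻ s, ‖k s‖ₑ ≠ ∞ := hki.2.ne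
  have key : ∀ x, (∫⁻ s, ‖k s‖ₑ * G (x, s)) ^ p ≤
      (∫⁻ s, ‖k s‖ₑ) ^ (p - 1) * ∫⁻ s, ‖k s‖ₑ * G (x, s) ^ p := by
    intro x
    have hGx : Measurable fun s => G (x, s) := by fun_prop
    let ν : Measure ℝ := volume.withDensity (fun s => ‖k s‖ₑ)
    have h := eLpNorm_le_eLpNorm_mul_rpow_measure_univ (μ := ν) (f := fun s => G (x,s))
      (p := 1) (q := ENNReal.ofReal p) (by simpa using hp) hGx.aestronglyMeasurable
    rw [eLpNorm_one_eq_lintegral_enorm, eLpNorm_eq_lintegral_rpow_enorm_toReal (by simpa using hp0) (by simp)] at h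
    simp only [enorm_eq_self, ENNReal.toReal_ofReal hp0.le, ENNReal.toReal_one] at h
    have hu : ν Set.univ = ∫⁻ s, ‖k s‖ₑ := by simp [ν]
    rw [hu] at h
    have e1 : ∫⁻ s, G (x,s) ∂ν = ∫⁻ s, ‖k s‖ₑ * G (x, s) := 
      lintegral_withDensity_eq_lintegral_mul _ hk.enorm hGx
    have e2 : ∫⁻ s, G (x,s) ^ p ∂ν = ∫⁻ s, ‖k s‖ₑ * G (x, s) ^ p := 
      lintegral_withDensity_eq_lintegral_mul _ hk.enorm (hGx.pow_const p)
    rw [e1, e2] at h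
    calc _ ≤ _ := ENNReal.rpow_le_rpow h hp0.le
      _ = _ := by
        rw [ENNReal.mul_rpow_of_nonneg _ _ hp0.le, ← ENNReal.rpow_mul, ← ENNReal.rpow_mul, mul_comm]
        congr 2
        · field_simp
        · field_simp
          simp
  calc _ ≤ ∫⁻ x, ((∫⁻ s, ‖k s‖ₑ) ^ (p - 1) * ∫⁻ s, ‖k s‖ₑ * G (x, s) ^ p) ∂μ := lintegral_mono key
    _ = (∫⁻ s, ‖k s‖ₑ) ^ (p - 1) * ∫⁻ x, (∫⁻ s, ‖k s‖ₑ * G (x, s) ^ p) ∂μ := by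
      rw [lintegral_const_mul']
      exact ENNReal.rpow_ne_top_of_nonneg (by linarith) hM
    _ = _ := by
      rw [lintegral_lintegral_swap]
      · congr 2; ext s
        rw [lintegral_const_mul']
        exact enorm_ne_top
      · apply Measurable.aemeasurable
        simp only [Function.uncurry_def]
        fun_prop
end meas

end HausSpec
namespace HausSpec
open MeasureTheory Real Filter Topology
open scoped ENNReal
set_option linter.unusedSectionVars false

/-- scaling property of a measure -/
def Sc (μ : Measure ℝ) (p c : ℝ) : Prop :=
  ∀ (s : ℝ) (g : ℝ → ℝ≥0∞), Measurable g →
    ∫⁻ x, g (x * Real.exp (-s)) ∂μ = ENNReal.ofReal (Real.exp (c * p * s)) * ∫⁻ x, g x ∂μ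

instance sigmaFinite_weight (a : ℝ) : SigmaFinite (weightMeasure a) := by
  unfold weightMeasure
  exact SigmaFinite.withDensity_of_ne_top' (fun x => by simp)

lemma lintegral_scale (s : ℝ) (g : ℝ → ℝ≥0∞) (hg : Measurable g) :
    ∫⁻ x, g (x * Real.exp (-s)) = ENNReal.ofReal (Real.exp s) * ∫⁻ x, g x := by
  have h := Real.map_volume_mul_right (Real.exp_pos (-s)).ne'
  have h2 : ∫⁻ x, g x ∂(Measure.map (· * Real.exp (-s)) volume) = ∫⁻ x, g (x * Real.exp (-s)) :=
    lintegral_map hg (by fun_prop)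
  rw [← h2, h, lintegral_smul_measure, Real.exp_neg, inv_inv, abs_of_pos (Real.exp_pos _)]
  rfl

lemma weight_scale {p a : ℝ} (hp : 1 ≤ p) : Sc (weightMeasure a) p ((a+1)/p) := by
  intro s g hg
  have hm : Measurable fun x : ℝ => ENNReal.ofReal (|x| ^ a) := by fun_prop
  unfold weightMeasure
  rw [lintegral_withDensity_eq_lintegral_mul _ hm (by fun_prop),
    lintegral_withDensity_eq_lintegral_mul _ hm hg]
  have : ∀ x : ℝ, ((fun x : ℝ => ENNReal.ofReal (|x| ^ a)) * fun x => g (x * Real.exp (-s))) x =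
      ENNReal.ofReal (Real.exp (a * s)) *
        (fun y : ℝ => ENNReal.ofReal (|y| ^ a) * g y) (x * Real.exp (-s)) := by
    intro x
    simp only [Pi.mul_apply]
    rw [← mul_assoc, ← ENNReal.ofReal_mul (Real.exp_pos _).le, abs_mul, abs_of_pos (Real.exp_pos _),
      Real.mul_rpow (abs_nonneg _) (Real.exp_pos _).le, ← Real.exp_mul, mul_left_comm, ← Real.exp_add]
    rw [show a * s + -s * a = 0 by ring]; simp
  simp_rw [this]
  rw [lintegral_const_mul' _ _ (by simp), lintegral_scale s (fun y : ℝ => ENNReal.ofReal (|y| ^ a) * g y) (by fun_prop), ← mul_assoc,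
    ← ENNReal.ofReal_mul (Real.exp_pos _).le, ← Real.exp_add]
  have hp0 : p ≠ 0 := by linarith
  congr 3
  field_simp

section
variable {μ : Measure ℝ} [SigmaFinite μ] {p c : ℝ}

lemma Sc.qmp (h : Sc μ p c) (s : ℝ) :
    Measure.QuasiMeasurePreserving (fun x : ℝ => x * Real.exp (-s)) μ μ := by
  refine ⟨by fun_prop, ?_⟩
  refine Measure.AbsolutelyContinuous.mk fun t ht h0 => ?_
  rw [Measure.map_apply (by fun_prop) ht]
  have := h s (t.indicator 1) (measurable_one.indicator ht)
  rw [lintegral_indicator_one ht, h0, mul_zero] at this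
  rw [← this, ← lintegral_indicator_one (ht.preimage (by fun_prop))]
  rfl

lemma V_measurable {f : ℝ → ℂ} (hf : Measurable f) (s : ℝ) : Measurable (V c s f) := by
  unfold V; fun_prop

lemma V_measurable2 {f : ℝ → ℂ} (hf : Measurable f) :
    Measurable (fun z : ℝ × ℝ => V c z.2 f z.1) := by
  unfold V; fun_prop

lemma Sc.congr (h : Sc μ p c) (s : ℝ) {f g : ℝ → ℂ} (hfg : f =ᵐ[μ] g) :
    V c s f =ᵐ[μ] V c s g := by
  filter_upwards [(h.qmp s).ae_eq_comp hfg] with x hx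
  simp only [Function.comp] at hx
  simp only [V, hx]

lemma Sc.lint (h : Sc μ p c) (hp : 1 ≤ p) (s : ℝ) {f : ℝ → ℂ} (hf : Measurable f) :
    ∫⁻ x, ‖V c s f x‖ₑ ^ p ∂μ = ∫⁻ x, ‖f x‖ₑ ^ p ∂μ := by
  have hp0 : 0 ≤ p := by linarith
  have : ∀ x, ‖V c s f x‖ₑ ^ p = ENNReal.ofReal (Real.exp (-(c * p * s))) *
      (fun y => ‖f y‖ₑ ^ p) (x * Real.exp (-s)) := by
    intro x
    simp only [V]
    rw [enorm_mul, ENNReal.mul_rpow_of_nonneg _ _ hp0]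
    congr 1
    rw [← ofReal_norm, Complex.norm_real, Real.norm_of_nonneg (Real.exp_pos _).le,
      ENNReal.ofReal_rpow_of_pos (Real.exp_pos _), ← Real.exp_mul]
    congr 2; ring
  simp_rw [this]
  rw [lintegral_const_mul' _ _ (by simp), h s (fun y => ‖f y‖ₑ ^ p) (by fun_prop), ← mul_assoc,
    ← ENNReal.ofReal_mul (Real.exp_pos _).le, ← Real.exp_add]
  simp

lemma eLp_eq (hp : 1 ≤ p) (f : ℝ → ℂ) :
    eLpNorm f (ENNReal.ofReal p) μ = (∫⁻ x, ‖f x‖ₑ ^ p ∂μ) ^ (1 / p) := by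
  have hp0 : 0 < p := by linarith
  rw [eLpNorm_eq_lintegral_rpow_enorm_toReal (by simpa using hp0) (by simp),
    ENNReal.toReal_ofReal hp0.le]

lemma eLp_pow (hp : 1 ≤ p) (f : ℝ → ℂ) :
    (∫⁻ x, ‖f x‖ₑ ^ p ∂μ) = eLpNorm f (ENNReal.ofReal p) μ ^ p := by
  have hp0 : 0 < p := by linarith
  rw [eLp_eq hp, ← ENNReal.rpow_mul, one_div_mul_cancel hp0.ne', ENNReal.rpow_one]

lemma Sc.eLp (h : Sc μ p c) (hp : 1 ≤ p) (s : ℝ) {f : ℝ → ℂ} (hf : Measurable f) :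
    eLpNorm (V c s f) (ENNReal.ofReal p) μ = eLpNorm f (ENNReal.ofReal p) μ := by
  rw [eLp_eq hp, eLp_eq hp, h.lint hp s hf]

lemma Lp_meas {P : ℝ≥0∞} (f : Lp ℂ P μ) : Measurable (f : ℝ → ℂ) :=
  (Lp.stronglyMeasurable f).measurable

lemma Sc.memLp (h : Sc μ p c) (hp : 1 ≤ p) (s : ℝ) (f : Lp ℂ (ENNReal.ofReal p) μ) :
    MemLp (V c s f) (ENNReal.ofReal p) μ :=
  ⟨(V_measurable (Lp_meas f) s).aestronglyMeasurable, by
    rw [h.eLp hp s (Lp_meas f)]; exact (Lp.memLp f).2⟩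

/-- the isometric dilation group -/
noncomputable def U (h : Sc μ p c) (hp : 1 ≤ p) [Fact (1 ≤ ENNReal.ofReal p)] (s : ℝ) :
    Lp ℂ (ENNReal.ofReal p) μ →L[ℂ] Lp ℂ (ENNReal.ofReal p) μ :=
  LinearMap.mkContinuous
    { toFun := fun f => (h.memLp hp s f).toLp _
      map_add' := fun f g => by
        apply Lp.ext
        refine (MemLp.coeFn_toLp _).trans ?_
        refine (h.congr s (Lp.coeFn_add f g)).trans ?_
        filter_upwards [Lp.coeFn_add ((h.memLp hp s f).toLp _) ((h.memLp hp s g).toLp _),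
          (h.memLp hp s f).coeFn_toLp, (h.memLp hp s g).coeFn_toLp] with x h1 h2 h3
        rw [h1, Pi.add_apply, h2, h3]
        simp only [V, Pi.add_apply]; ring
      map_smul' := fun r f => by
        apply Lp.ext
        refine (MemLp.coeFn_toLp _).trans ?_
        refine (h.congr s (Lp.coeFn_smul r f)).trans ?_
        filter_upwards [Lp.coeFn_smul r ((h.memLp hp s f).toLp _),
          (h.memLp hp s f).coeFn_toLp] with x h1 h2
        simp only [RingHom.id_apply]
        rw [h1, Pi.smul_apply, h2]
        simp only [V, Pi.smul_apply, smul_eq_mul]; ring } 1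
    (fun f => by
      simp only [LinearMap.coe_mk, AddHom.coe_mk, one_mul]
      rw [Lp.norm_toLp, h.eLp hp s (Lp_meas f), Lp.norm_def])

variable [Fact (1 ≤ ENNReal.ofReal p)]

lemma U_coe (h : Sc μ p c) (hp : 1 ≤ p) (s : ℝ) (f : Lp ℂ (ENNReal.ofReal p) μ) :
    U h hp s f =ᵐ[μ] V c s f := (h.memLp hp s f).coeFn_toLp

lemma U_norm_le (h : Sc μ p c) (hp : 1 ≤ p) (s : ℝ) : ‖U h hp s‖ ≤ 1 :=
  LinearMap.mkContinuous_norm_le _ zero_le_one _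

lemma V_V (s t : ℝ) (f : ℝ → ℂ) : V c s (V c t f) = V c (s + t) f := by
  ext x
  simp only [V]
  rw [← mul_assoc, ← Complex.ofReal_mul, ← Real.exp_add, mul_assoc x, ← Real.exp_add]
  congr 3
  · ring_nf
  · ring_nf

lemma U_add (h : Sc μ p c) (hp : 1 ≤ p) (s t : ℝ) : U h hp (s + t) = U h hp s * U h hp t := by
  ext1 f
  apply Lp.ext
  refine (U_coe h hp _ f).trans ?_
  rw [← V_V]
  exact ((U_coe h hp s _).trans (h.congr s (U_coe h hp t f))).symm

lemma U_zero (h : Sc μ p c) (hp : 1 ≤ p) : U h hp 0 = 1 := by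
  ext1 f
  apply Lp.ext
  refine (U_coe h hp _ f).trans ?_
  refine Eventually.of_forall fun x => ?_
  simp [V]

/-- Minkowski-type bounds for C -/
lemma Sc.bound (h : Sc μ p c) (hp : 1 ≤ p) {k : ℝ → ℂ} (hk : Measurable k) (hki : Integrable k)
    {f : ℝ → ℂ} (hf : Measurable f) :
    ∫⁻ x, (∫⁻ s, ‖k s * V c s f x‖ₑ) ^ p ∂μ ≤ (∫⁻ s, ‖k s‖ₑ) ^ p * ∫⁻ x, ‖f x‖ₑ ^ p ∂μ := by
  have hp0 : 0 < p := by linarith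
  have := jensen (μ := μ) hp hk hki (G := fun z => ‖V c z.2 f z.1‖ₑ) (V_measurable2 hf).enorm
  simp only [h.lint hp _ hf] at this
  rw [lintegral_mul_const _ hk.enorm, ← mul_assoc] at this
  simp_rw [enorm_mul]
  refine this.trans (le_of_eq ?_)
  congr 1
  nth_rewrite 2 [← ENNReal.rpow_one (∫⁻ s, ‖k s‖ₑ)]
  rw [← ENNReal.rpow_add_of_nonneg _ _ (by linarith) zero_le_one]
  congr 1; ring

lemma Sc.ae_integrable (h : Sc μ p c) (hp : 1 ≤ p) {k : ℝ → ℂ} (hk : Measurable k)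
    (hki : Integrable k) (f : Lp ℂ (ENNReal.ofReal p) μ) :
    ∀ᵐ x ∂μ, Integrable (fun s => k s * V c s f x) := by
  have hp0 : 0 < p := by linarith
  have hb := h.bound hp hk hki (Lp_meas f)
  have hfin : ∫⁻ x, (∫⁻ s, ‖k s * V c s f x‖ₑ) ^ p ∂μ ≠ ∞ := by
    refine ne_top_of_le_ne_top ?_ hb
    refine ENNReal.mul_ne_top (ENNReal.rpow_ne_top_of_nonneg hp0.le hki.2.ne) ?_
    rw [eLp_pow hp]
    exact ENNReal.rpow_ne_top_of_nonneg hp0.le (Lp.memLp f).2.ne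
  have hmm : Measurable fun z : ℝ × ℝ => k z.2 * V c z.2 f z.1 :=
    (hk.comp measurable_snd).mul (V_measurable2 (Lp_meas f))
  have hme : Measurable fun x => ∫⁻ s, ‖k s * V c s f x‖ₑ :=
    Measurable.lintegral_prod_right' (f := fun z : ℝ × ℝ => ‖k z.2 * V c z.2 f z.1‖ₑ) hmm.enorm
  filter_upwards [ae_lt_top (hme.pow_const p) hfin] with x hx
  refine ⟨(hmm.comp (measurable_const.prodMk measurable_id)).aestronglyMeasurable, ?_⟩
  rwa [ENNReal.rpow_lt_top_iff_of_pos hp0] at hx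

lemma Sc.C_bound (h : Sc μ p c) (hp : 1 ≤ p) {k : ℝ → ℂ} (hk : Measurable k) (hki : Integrable k)
    {f : ℝ → ℂ} (hf : Measurable f) :
    eLpNorm (C c k f) (ENNReal.ofReal p) μ ≤
      (∫⁻ s, ‖k s‖ₑ) * eLpNorm f (ENNReal.ofReal p) μ := by
  have hp0 : 0 < p := by linarith
  rw [← ENNReal.rpow_le_rpow_iff hp0, ENNReal.mul_rpow_of_nonneg _ _ hp0.le, ← eLp_pow hp,
    ← eLp_pow hp]
  refine le_trans (lintegral_mono fun x => ?_) (h.bound hp hk hki hf)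
  exact ENNReal.rpow_le_rpow (enorm_integral_le_lintegral_enorm _) hp0.le

lemma Sc.C_congr (h : Sc μ p c) (k : ℝ → ℂ) {f g : ℝ → ℂ} (hf : Measurable f) (hg : Measurable g)
    (hfg : f =ᵐ[μ] g) : C c k f =ᵐ[μ] C c k g := by
  have hA : MeasurableSet {z : ℝ × ℝ | V c z.2 f z.1 = V c z.2 g z.1} :=
    measurableSet_eq_fun (V_measurable2 hf) (V_measurable2 hg)
  have h1 : ∀ᵐ s : ℝ, ∀ᵐ x ∂μ, V c s f x = V c s g x :=
    Eventually.of_forall fun s => h.congr s hfg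
  have h2 := (Measure.ae_ae_comm (μ := volume) (ν := μ) (p := fun s x => V c s f x = V c s g x)
    (measurableSet_eq_fun ((V_measurable2 hf).comp measurable_swap)
      ((V_measurable2 hg).comp measurable_swap))).1 h1
  filter_upwards [h2] with x hx
  unfold C
  refine integral_congr_ae ?_
  filter_upwards [hx] with s hs
  rw [hs]

lemma C_V (k f : ℝ → ℂ) (r : ℝ) : C c k (V c r f) = V c r (C c k f) := by
  ext x
  unfold C
  have : V c r (fun x => ∫ s, k s * V c s f x) x =
    ∫ s, (Real.exp (-(c * r)) : ℂ) * (k s * V c s f (x * Real.exp (-r))) := by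
    rw [integral_const_mul]; rfl
  rw [this]
  congr 1; ext s
  have := congrFun (V_V (c := c) s r f) x
  rw [add_comm, ← V_V] at this
  rw [this]; simp only [V]; ring

/-- translation -/
lemma V_C (k f : ℝ → ℂ) (r : ℝ) : V c r (C c k f) = C c (fun s => k (s - r)) f := by
  rw [← C_V]
  ext x
  unfold C
  rw [← integral_sub_right_eq_self _ r]
  congr 1; ext s
  have := congrFun (V_V (c := c) (s - r) r f) x
  rw [this, sub_add_cancel]

lemma C_sub_ae (h : Sc μ p c) (hp : 1 ≤ p) {k l : ℝ → ℂ} (hk : Measurable k) (hki : Integrable k)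
    (hl : Measurable l) (hli : Integrable l) (f : Lp ℂ (ENNReal.ofReal p) μ) :
    C c (k - l) f =ᵐ[μ] C c k f - C c l f := by
  filter_upwards [h.ae_integrable hp hk hki f, h.ae_integrable hp hl hli f] with x h1 h2
  simp only [C, Pi.sub_apply]
  rw [← integral_sub h1 h2]
  simp_rw [sub_mul]

end

end HausSpec
namespace HausSpec
open MeasureTheory Real Filter Topology
open scoped ENNReal
set_option linter.unusedSectionVars false

lemma char_classify (h : ℝ → ℂ) (hc : Continuous h) (hadd : ∀ s t, h (s + t) = h s * h t)
    (h0 : h 0 = 1) (M : ℝ) (hM : ∀ s, ‖h s‖ ≤ M) :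
    ∃ ξ : ℝ, ∀ s : ℝ, h s = Complex.exp (-(Complex.I * ξ * s)) := by
  let F : ℝ → ℂ := fun u => ∫ t in (0:ℝ)..u, h t
  have hF : ∀ u, HasDerivAt F (h u) u := fun u =>
    intervalIntegral.integral_hasDerivAt_right (hc.intervalIntegrable _ _)
      hc.aestronglyMeasurable.stronglyMeasurableAtFilter hc.continuousAt
  obtain ⟨u, hu⟩ : ∃ u, F u ≠ 0 := by
    by_contra! hcon
    have h1 := hF 0
    rw [show F = fun _ => 0 from funext hcon] at h1
    have := h1.unique (hasDerivAt_const 0 (0:ℂ))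
    rw [h0] at this
    exact one_ne_zero this
  have hform : ∀ s, h s = (F (s + u) - F s) / F u := by
    intro s
    rw [eq_div_iff hu]
    simp only [F]
    rw [intervalIntegral.integral_interval_sub_left (hc.intervalIntegrable _ _)
      (hc.intervalIntegrable _ _), ← intervalIntegral.integral_const_mul]
    simp_rw [← hadd]
    rw [intervalIntegral.integral_comp_add_left]
    simp
  have hdiff : Differentiable ℝ h := by
    have hFd : Differentiable ℝ F := fun x => (hF x).differentiableAt
    rw [show h = fun s => (F (s + u) - F s) / F u from funext hform]
    fun_prop
  set z := deriv h 0 with hz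
  have hd : ∀ s, HasDerivAt h (h s * z) s := by
    intro s
    have h1 : HasDerivAt h z (s - s) := by rw [sub_self]; exact (hdiff 0).hasDerivAt
    have h2 : HasDerivAt (fun t => h (t - s)) z s := by
      simpa using HasDerivAt.comp_sub_const s s h1
    have h3 := h2.const_mul (h s)
    refine h3.congr_of_eventuallyEq (Eventually.of_forall fun t => ?_)
    simp only
    rw [← hadd]; congr 1; ring
  have he : ∀ s : ℝ, HasDerivAt (fun s : ℝ => Complex.exp (-(z * s))) (Complex.exp (-(z * s)) * (-(z * 1))) s := by
    intro s
    have : HasDerivAt (fun s : ℝ => -(z * (s:ℂ))) (-(z * 1)) s :=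
      ((Complex.ofRealCLM.hasDerivAt (x := s)).const_mul z).neg
    exact this.cexp
  have hconst : ∀ s : ℝ, h s * Complex.exp (-(z * s)) = 1 := by
    intro s
    have hh : ∀ s : ℝ, HasDerivAt (fun s : ℝ => h s * Complex.exp (-(z * s))) 0 s := by
      intro s
      have h5 := (hd s).mul (he s)
      rw [show h s * z * Complex.exp (-(z * s)) + h s * (Complex.exp (-(z * s)) * (-(z * 1))) = 0 by
        ring] at h5
      exact h5
    have := is_const_of_deriv_eq_zero (f := fun s : ℝ => h s * Complex.exp (-(z * s)))
      (fun x => (hh x).differentiableAt) (fun x => (hh x).deriv) s 0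
    simpa [h0] using this
  have hexp : ∀ s : ℝ, h s = Complex.exp (z * s) := by
    intro s
    have h1 := hconst s
    rw [Complex.exp_neg] at h1
    have := Complex.exp_ne_zero (z * s)
    field_simp at h1
    exact h1
  have hre : z.re = 0 := by
    by_contra hne
    have hb : ∀ s : ℝ, z.re * s + 1 ≤ M := by
      intro s
      refine (Real.add_one_le_exp _).trans ?_
      have := hM s
      rw [hexp, Complex.norm_exp] at this
      simpa using this
    have := hb (M / z.re)
    rw [mul_div_cancel₀ _ hne] at this
    linarith
  refine ⟨-z.im, fun s => ?_⟩
  rw [hexp]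
  congr 1
  have : z = z.im * Complex.I := by
    apply Complex.ext <;> simp [hre]
  push_cast
  linear_combination (s : ℂ) * this

section
variable {μ : Measure ℝ} [SigmaFinite μ] {P : ℝ≥0∞} [hP : Fact (1 ≤ P)]

lemma setint_bound {E : Set ℝ} (hE : μ E ≠ ∞) (f : Lp ℂ P μ) :
    IntegrableOn f E μ ∧ ∫ x in E, ‖f x‖ ∂μ ≤ (μ E ^ (1 - 1 / P.toReal)).toReal * ‖f‖ := by
  have h := eLpNorm_le_eLpNorm_mul_rpow_measure_univ (μ := μ.restrict E) (f := f) hP.out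
    (Lp.aestronglyMeasurable f).restrict
  simp only [Measure.restrict_apply_univ, ENNReal.toReal_one, div_one] at h
  have hnn : 0 ≤ 1 - 1 / P.toReal := by
    rcases eq_or_ne P ∞ with rfl | hPt
    · simp
    · have : 1 ≤ P.toReal := by
        simpa using ENNReal.toReal_mono hPt hP.out
      rw [sub_nonneg, div_le_one (by linarith)]; exact this
  have hEf : μ E ^ (1 - 1 / P.toReal) ≠ ∞ := ENNReal.rpow_ne_top_of_nonneg hnn hE
  have h2 : eLpNorm f 1 (μ.restrict E) ≤ eLpNorm f P μ * μ E ^ (1 - 1 / P.toReal) :=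
    h.trans (by gcongr; exact Measure.restrict_le_self)
  have hfin : eLpNorm f P μ * μ E ^ (1 - 1 / P.toReal) ≠ ∞ := ENNReal.mul_ne_top (Lp.memLp f).2.ne hEf
  have hintg : IntegrableOn f E μ := by
    rw [IntegrableOn, ← memLp_one_iff_integrable]
    exact ⟨(Lp.aestronglyMeasurable f).restrict, h2.trans_lt hfin.lt_top⟩
  refine ⟨hintg, ?_⟩
  rw [integral_norm_eq_lintegral_enorm hintg.1, ← eLpNorm_one_eq_lintegral_enorm, Lp.norm_def,
    ← ENNReal.toReal_mul, mul_comm]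
  exact ENNReal.toReal_mono hfin h2

/-- integration over a finite-measure set -/
noncomputable def ell {E : Set ℝ} (hE : μ E ≠ ∞) : Lp ℂ P μ →L[ℂ] ℂ :=
  LinearMap.mkContinuous
    { toFun := fun f => ∫ x in E, f x ∂μ
      map_add' := fun f g => by
        rw [← integral_add (setint_bound hE f).1 (setint_bound hE g).1]
        exact integral_congr_ae (ae_restrict_of_ae (Lp.coeFn_add f g))
      map_smul' := fun r f => by
        rw [RingHom.id_apply, ← integral_smul]
        exact integral_congr_ae (ae_restrict_of_ae (Lp.coeFn_smul r f)) }
    (μ E ^ (1 - 1 / P.toReal)).toReal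
    (fun f => (norm_integral_le_integral_norm _).trans (setint_bound hE f).2)

lemma ell_apply {E : Set ℝ} (hE : μ E ≠ ∞) (f : Lp ℂ P μ) : ell hE f = ∫ x in E, f x ∂μ := rfl

lemma Lp_integral_coe (G : ℝ → Lp ℂ P μ) (hG : Integrable G) (g : ℝ × ℝ → ℂ)
    (hg : Measurable g) (hGg : ∀ s, G s =ᵐ[μ] fun x => g (x, s)) :
    (∫ s, G s : Lp ℂ P μ) =ᵐ[μ] fun x => ∫ s, g (x, s) := by
  have hprod : ∀ E, MeasurableSet E → μ E < ∞ → Integrable g ((μ.restrict E).prod volume) := by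
    intro E hE hEf
    rw [integrable_prod_iff' hg.aestronglyMeasurable]
    have hae : ∀ s, G s =ᵐ[μ.restrict E] fun x => g (x, s) := fun s => ae_restrict_of_ae (hGg s)
    refine ⟨Eventually.of_forall fun s => (setint_bound hEf.ne (G s)).1.congr (hae s), ?_⟩
    refine (hG.norm.const_mul (μ E ^ (1 - 1 / P.toReal)).toReal).mono' ?_ ?_
    · exact (hg.norm.stronglyMeasurable.integral_prod_left'
        (μ := μ.restrict E)).aestronglyMeasurable
    · refine Eventually.of_forall fun s => ?_
      rw [Real.norm_of_nonneg (integral_nonneg fun _ => norm_nonneg _)]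
      refine le_trans (le_of_eq ?_) (setint_bound hEf.ne (G s)).2
      refine integral_congr_ae ?_
      filter_upwards [hae s] with x hx
      rw [hx]
  refine ae_eq_of_forall_setIntegral_eq_of_sigmaFinite ?_ ?_ ?_
  · intro E hE hEf
    exact (setint_bound hEf.ne _).1
  · intro E hE hEf
    exact (hprod E hE hEf).integral_prod_left
  · intro E hE hEf
    rw [← ell_apply hEf.ne, ← ContinuousLinearMap.integral_comp_comm _ hG,
      integral_integral_swap (f := fun x s => g (x, s)) (hprod E hE hEf)]
    refine integral_congr_ae (Eventually.of_forall fun s => ?_)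
    exact integral_congr_ae (ae_restrict_of_ae (hGg s))
end

lemma translation_cont {k : ℝ → ℂ} (hki : Integrable k) (r₀ : ℝ) :
    Tendsto (fun r => ∫⁻ s, ‖k (s - r) - k (s - r₀)‖ₑ) (𝓝 r₀) (𝓝 0) := by
  let K : Lp ℂ 1 (volume : Measure ℝ) := hki.toL1
  let g : ℝ → C(ℝ, ℝ) := fun r => ⟨fun s => s - r, by fun_prop⟩
  have hg : Continuous g := by
    refine ContinuousMap.continuous_of_continuous_uncurry _ ?_
    simp only [Function.uncurry_def, g, ContinuousMap.coe_mk]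
    fun_prop
  have hgm : ∀ r, MeasurePreserving (g r) volume volume := fun r =>
    measurePreserving_sub_right volume r
  have hcont : Continuous fun r => Lp.compMeasurePreserving (g r) (hgm r) K :=
    continuous_const.compMeasurePreservingLp hg hgm (by simp)
  have h1 := (hcont.sub continuous_const).enorm.tendsto (f := fun r => ‖Lp.compMeasurePreserving (g r) (hgm r) K - Lp.compMeasurePreserving (g r₀) (hgm r₀) K‖ₑ) r₀
  simp only [sub_self, enorm_zero] at h1
  refine h1.congr fun r => ?_
  rw [Lp.enorm_def, eLpNorm_one_eq_lintegral_enorm]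
  refine lintegral_congr_ae ?_
  have hk : ∀ r, Lp.compMeasurePreserving (g r) (hgm r) K =ᵐ[volume] fun s => k (s - r) := by
    intro r
    refine (Lp.coeFn_compMeasurePreserving _ _).trans ?_
    exact (hgm r).quasiMeasurePreserving.ae_eq_comp (Integrable.coeFn_toL1 hki)
  filter_upwards [hk r, hk r₀, Lp.coeFn_sub (Lp.compMeasurePreserving (g r) (hgm r) K)
    (Lp.compMeasurePreserving (g r₀) (hgm r₀) K)] with s h1 h2 h3
  rw [h3, Pi.sub_apply, h1, h2]

end HausSpec
namespace HausSpec
open MeasureTheory Real Filter Topology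
open scoped ENNReal
set_option linter.unusedSectionVars false

section
variable {μ : Measure ℝ} [SigmaFinite μ] {p c : ℝ} [Fact (1 ≤ ENNReal.ofReal p)]
  {k : ℝ → ℂ}
  {T : Lp ℂ (ENNReal.ofReal p) μ →L[ℂ] Lp ℂ (ENNReal.ofReal p) μ}

lemma C_measurable (hk : Measurable k) {f : ℝ → ℂ} (hf : Measurable f) : Measurable (C c k f) := by
  have hmm : Measurable fun z : ℝ × ℝ => k z.2 * V c z.2 f z.1 :=
    (hk.comp measurable_snd).mul (V_measurable2 hf)
  exact hmm.stronglyMeasurable.integral_prod_right'.measurable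

lemma T_comm (h : Sc μ p c) (hp : 1 ≤ p) (hT : ∀ f, T f =ᵐ[μ] C c k f) (r : ℝ) :
    T * U h hp r = U h hp r * T := by
  ext1 f
  apply Lp.ext
  refine (hT (U h hp r f)).trans ?_
  refine (h.C_congr k (Lp_meas _) (V_measurable (Lp_meas f) r) (U_coe h hp r f)).trans ?_
  rw [C_V]
  exact ((U_coe h hp r (T f)).trans (h.congr r (hT f))).symm

lemma UT_bound (h : Sc μ p c) (hp : 1 ≤ p) (hk : Measurable k) (hki : Integrable k)
    (hT : ∀ f, T f =ᵐ[μ] C c k f) (r r₀ : ℝ) :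
    ‖U h hp r * T - U h hp r₀ * T‖ ≤ (∫⁻ s, ‖k (s - r) - k (s - r₀)‖ₑ).toReal := by
  refine ContinuousLinearMap.opNorm_le_bound _ ENNReal.toReal_nonneg fun f => ?_
  have h1 : ∀ r, (U h hp r * T) f =ᵐ[μ] C c (fun s => k (s - r)) f := by
    intro r
    rw [← V_C]
    exact (U_coe h hp r (T f)).trans (h.congr r (hT f))
  have hm : ∀ r, Measurable fun s => k (s - r) := fun r => by fun_prop
  have hi : ∀ r, Integrable fun s => k (s - r) := fun r => hki.comp_sub_right r
  have h2 : (U h hp r * T - U h hp r₀ * T) f =ᵐ[μ]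
      C c ((fun s => k (s - r)) - fun s => k (s - r₀)) f := by
    refine EventuallyEq.trans ?_ (C_sub_ae h hp (hm r) (hi r) (hm r₀) (hi r₀) f).symm
    exact (Lp.coeFn_sub _ _).trans ((h1 r).sub (h1 r₀))
  rw [Lp.norm_def, Lp.norm_def, ← ENNReal.toReal_mul, eLpNorm_congr_ae h2]
  refine ENNReal.toReal_mono ?_
    (h.C_bound hp ((hm r).sub (hm r₀)) ((hi r).sub (hi r₀)) (Lp_meas f))
  exact ENNReal.mul_ne_top ((hi r).sub (hi r₀)).2.ne (Lp.memLp f).2.ne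

lemma UT_cont (h : Sc μ p c) (hp : 1 ≤ p) (hk : Measurable k) (hki : Integrable k)
    (hT : ∀ f, T f =ᵐ[μ] C c k f) : Continuous fun r => U h hp r * T := by
  rw [continuous_iff_continuousAt]
  intro r₀
  rw [ContinuousAt, tendsto_iff_norm_sub_tendsto_zero]
  refine squeeze_zero (fun _ => norm_nonneg _) (fun r => UT_bound h hp hk hki hT r r₀) ?_
  have := (ENNReal.tendsto_toReal ENNReal.zero_ne_top).comp (translation_cont hki r₀)
  simpa [Function.comp_def] using this

lemma UT_norm_le (h : Sc μ p c) (hp : 1 ≤ p) (r : ℝ) : ‖U h hp r * T‖ ≤ ‖T‖ := by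
  refine (norm_mul_le _ _).trans ?_
  have := mul_le_mul_of_nonneg_right (U_norm_le h hp r) (norm_nonneg T)
  simpa using this

lemma UT_int (h : Sc μ p c) (hp : 1 ≤ p) (hk : Measurable k) (hki : Integrable k)
    (hT : ∀ f, T f =ᵐ[μ] C c k f) : Integrable fun r => k r • (U h hp r * T) := by
  refine (hki.norm.mul_const ‖T‖).mono'
    (hk.aestronglyMeasurable.smul (UT_cont h hp hk hki hT).aestronglyMeasurable) ?_
  refine Eventually.of_forall fun r => ?_
  rw [norm_smul]
  exact mul_le_mul_of_nonneg_left (UT_norm_le h hp r) (norm_nonneg _)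

lemma TT_eq (h : Sc μ p c) (hp : 1 ≤ p) (hk : Measurable k) (hki : Integrable k)
    (hT : ∀ f, T f =ᵐ[μ] C c k f) : T * T = ∫ r, k r • (U h hp r * T) := by
  ext1 f
  have hi := UT_int h hp hk hki hT
  rw [ContinuousLinearMap.integral_apply hi]
  apply Lp.ext
  refine (hT (T f)).trans ?_
  have hmm : Measurable fun z : ℝ × ℝ => k z.2 * V c z.2 (T f) z.1 :=
    (hk.comp measurable_snd).mul (V_measurable2 (Lp_meas _))
  refine (Lp_integral_coe _ (hi.apply_continuousLinearMap f) _ hmm fun s => ?_).symm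
  refine (Lp.coeFn_smul _ _).trans ?_
  filter_upwards [U_coe h hp s (T f)] with x hx
  simp only [Pi.smul_apply, smul_eq_mul]
  congr 1

lemma char_value {A : Type*} [NormedCommRing A] [NormedAlgebra ℂ A] [CompleteSpace A]
    (χ : WeakDual.characterSpace ℂ A) (u : ℝ → A) (t : A)
    (hu0 : u 0 = 1) (hadd : ∀ r s, u (r + s) = u r * u s) (hb : ∀ r, ‖u r‖ ≤ 1)
    (hcont : Continuous fun r => u r * t)
    (hintg : Integrable fun r => k r • (u r * t))
    (htt : t * t = ∫ r, k r • (u r * t)) (hne : χ t ≠ 0) :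
    ∃ ξ : ℝ, χ t = ∫ r : ℝ, k r * Complex.exp (-(Complex.I * ξ * r)) := by
  let L : A →L[ℂ] ℂ := WeakDual.CharacterSpace.toCLM χ
  have hL : ∀ a, L a = χ a := fun a => rfl
  have hc : Continuous fun r => χ (u r) := by
    have : (fun r => χ (u r)) = fun r => L (u r * t) / χ t := by
      ext r
      rw [hL, map_mul, mul_div_cancel_right₀ _ hne]
    rw [this]
    exact (L.continuous.comp hcont).div_const _
  obtain ⟨ξ, hξ⟩ := char_classify (fun r => χ (u r)) hc
    (fun s t => by simp only [hadd, map_mul]) (by simp [hu0]) ‖L‖ (fun s => by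
      refine (L.le_opNorm (u s)).trans ?_
      exact mul_le_of_le_one_right (norm_nonneg _) (hb s))
  refine ⟨ξ, ?_⟩
  have h1 : χ t * χ t = (∫ r : ℝ, k r * Complex.exp (-(Complex.I * ξ * r))) * χ t := by
    rw [← map_mul, htt, ← hL, ← L.integral_comp_comm hintg, ← integral_mul_const]
    congr 1; ext r
    rw [map_smul, hL, map_mul, ← hξ, smul_eq_mul, mul_assoc]
  exact mul_right_cancel₀ hne h1

lemma rl {k : ℝ → ℂ} :
    (0:ℂ) ∈ closure (Set.range fun ξ : ℝ => ∫ r : ℝ, k r * Complex.exp (-(Complex.I * ξ * r))) := by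
  have h := Real.tendsto_integral_exp_smul_cocompact k
  have h2 := h.mono_left (atTop_le_cocompact (α := ℝ))
  refine mem_closure_of_tendsto h2 (Eventually.of_forall fun w => ⟨2 * π * w, ?_⟩)
  simp only
  congr 1; ext v
  rw [Circle.smul_def, Real.fourierChar_apply, smul_eq_mul, mul_comm]
  congr 2
  push_cast; ring

lemma meas_aux {A : Type*} [NormedRing A] [NormedAlgebra ℂ A] (hk : Measurable k) {g : ℝ → A}
    (hg : Continuous g) : AEStronglyMeasurable (fun r => k r • g r) :=
  hk.aestronglyMeasurable.smul hg.aestronglyMeasurable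

lemma gelfand_abs {B : Type*} [NormedRing B] [NormedAlgebra ℂ B] [CompleteSpace B]
    (hk : Measurable k) (v : ℝ → B) (w : B)
    (hu0 : v 0 = 1) (hadd : ∀ r s, v (r + s) = v r * v s) (hb : ∀ r, ‖v r‖ ≤ 1)
    (hvw : ∀ r, w * v r = v r * w)
    (hcont' : Continuous fun r => v r * w)
    (hintg' : Integrable fun r => k r • (v r * w))
    (htt : w * w = ∫ r, k r • (v r * w)) :
    spectrum ℂ w ⊆
      closure (Set.range fun ξ : ℝ => ∫ r : ℝ, k r * Complex.exp (-(Complex.I * ξ * r))) := by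
  let S : Set B := insert w (Set.range v)
  have hUU : ∀ r s, v r * v s = v s * v r := fun r s => by
    rw [← hadd, ← hadd, add_comm]
  have hS : S ⊆ S.centralizer := by
    rintro x (rfl | ⟨r, rfl⟩) y (rfl | ⟨s, rfl⟩)
    · rfl
    · exact (hvw s).symm
    · exact hvw r
    · exact hUU s r
  let A : Subalgebra ℂ B := Subalgebra.centralizer ℂ S.centralizer
  have hSA : S ⊆ A := Set.subset_centralizer_centralizer
  have hcomm : ∀ a b : A, a * b = b * a := by
    intro a b
    apply Subtype.ext
    have ha : (a : B) ∈ S.centralizer.centralizer := a.2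
    have hb : (b : B) ∈ S.centralizer := Set.centralizer_subset hS b.2
    exact (ha _ hb).symm
  let _ : NormedCommRing A := { (inferInstance : NormedRing A) with mul_comm := hcomm }
  have hcl : IsClosed (A : Set B) := Set.isClosed_centralizer _
  have : CompleteSpace A := hcl.completeSpace_coe
  let t : A := ⟨w, hSA (Set.mem_insert _ _)⟩
  let u : ℝ → A := fun r => ⟨v r, hSA (Set.mem_insert_of_mem _ ⟨r, rfl⟩)⟩
  intro z hz
  have hz' : z ∈ spectrum ℂ t := spectrum.subset_subalgebra t hz
  obtain ⟨χ, rfl⟩ := WeakDual.CharacterSpace.mem_spectrum_iff_exists.1 hz'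
  by_cases hne : χ t = 0
  · rw [hne]; exact rl
  have hcont : Continuous fun r => u r * t := Continuous.subtype_mk hcont' _
  have hintg : Integrable fun r => k r • (u r * t) :=
    ⟨meas_aux hk hcont, hintg'.2⟩
  obtain ⟨ξ, hξ⟩ := char_value χ u t (Subtype.ext hu0)
    (fun r s => Subtype.ext (hadd r s)) (fun r => hb r) hcont hintg
    (by
      apply Subtype.ext
      have := ContinuousLinearMap.integral_comp_comm (A.toSubmodule.subtypeL) hintg
      exact htt.trans this) hne
  rw [hξ]
  exact subset_closure ⟨ξ, rfl⟩

lemma spec_sub (h : Sc μ p c) (hp : 1 ≤ p) (hk : Measurable k) (hki : Integrable k)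
    (hT : ∀ f, T f =ᵐ[μ] C c k f) :
    spectrum ℂ T ⊆
      closure (Set.range fun ξ : ℝ => ∫ r : ℝ, k r * Complex.exp (-(Complex.I * ξ * r))) :=
  gelfand_abs hk (U h hp) T (U_zero h hp) (U_add h hp) (U_norm_le h hp) (T_comm h hp hT)
    (UT_cont h hp hk hki hT) (UT_int h hp hk hki hT) (TT_eq h hp hk hki hT)

end

end HausSpec
namespace HausSpec
open MeasureTheory Real Filter Topology
open scoped ENNReal
set_option linter.unusedSectionVars false

lemma base_integrable {ε : ℝ} (hε : 0 < ε) :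
    Integrable fun x : ℝ => Real.exp (-Real.log |x| - ε * |Real.log (|x|)|) := by
  let f : ℝ → ℝ := fun t => Real.exp (-Real.log t - ε * |Real.log t|)
  have h1 : ∫ x, f |x| = 2 * ∫ t in Set.Ioi (0:ℝ), f t := integral_comp_abs
  have h := integral_image_eq_integral_abs_deriv_smul (s := Set.univ) (f := Real.exp)
    (f' := Real.exp) MeasurableSet.univ (fun x _ => (Real.hasDerivAt_exp x).hasDerivWithinAt)
    Real.exp_injective.injOn f
  rw [Set.image_univ, Real.range_exp] at h
  have h2 : ∀ x : ℝ, |Real.exp x| • f (Real.exp x) = (fun y => Real.exp (-ε * y)) |x| := by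
    intro x
    simp only [f, Real.log_exp, abs_of_pos (Real.exp_pos x), smul_eq_mul, ← Real.exp_add]
    congr 1; ring
  simp_rw [h2] at h
  rw [Measure.restrict_univ, integral_comp_abs (f := fun y => Real.exp (-ε * y)),
    integral_exp_mul_Ioi (by linarith)] at h
  refine Integrable.of_integral_ne_zero (f := fun x => f |x|) ?_
  rw [h1, h]
  simp [hε.ne']

/-- approximate eigenfunction -/
noncomputable def gg (c ξ δ : ℝ) (x : ℝ) : ℂ :=
  (Real.exp (-(c * Real.log x) - δ * |Real.log x|) : ℂ) * Complex.exp (Complex.I * ξ * Real.log x)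

lemma gg_measurable (c ξ δ : ℝ) : Measurable (gg c ξ δ) := by
  unfold gg
  have := Real.measurable_log
  fun_prop

lemma gg_norm (c ξ δ x : ℝ) : ‖gg c ξ δ x‖ = Real.exp (-(c * Real.log x) - δ * |Real.log x|) := by
  unfold gg
  rw [norm_mul, Complex.norm_real, Real.norm_of_nonneg (Real.exp_pos _).le, Complex.norm_exp]
  simp

lemma gg_fin {p a : ℝ} (hp : 1 ≤ p) (ξ : ℝ) {δ : ℝ} (hδ : 0 < δ) :
    ∫⁻ x, ‖gg ((a+1)/p) ξ δ x‖ₑ ^ p ∂(weightMeasure a) ≠ ∞ := by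
  have hp0 : 0 < p := by linarith
  have hm : Measurable fun x : ℝ => ENNReal.ofReal (|x| ^ a) := by fun_prop
  unfold weightMeasure
  rw [lintegral_withDensity_eq_lintegral_mul _ hm ((gg_measurable _ _ _).enorm.pow_const p)]
  have hfin := (base_integrable (mul_pos hp0 hδ)).lintegral_lt_top
  refine ne_of_lt (lt_of_eq_of_lt ?_ hfin)
  refine lintegral_congr_ae ?_
  filter_upwards [compl_mem_ae_iff.2 (measure_singleton (μ := (volume : Measure ℝ)) 0)] with x hx
  have hx0 : 0 < |x| := abs_pos.2 hx
  simp only [Pi.mul_apply]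
  rw [← ofReal_norm, gg_norm, ENNReal.ofReal_rpow_of_pos (Real.exp_pos _), ← Real.exp_mul,
    ← ENNReal.ofReal_mul (by positivity), Real.rpow_def_of_pos hx0, ← Real.exp_add, Real.log_abs]
  congr 2
  field_simp
  ring

lemma weight_ne_zero (a : ℝ) : weightMeasure a ≠ 0 := by
  unfold weightMeasure
  rw [Ne, withDensity_eq_zero_iff (by fun_prop)]
  intro h
  have : ∀ᵐ x : ℝ, False := by
    filter_upwards [h, compl_mem_ae_iff.2 (measure_singleton (μ := (volume : Measure ℝ)) 0)]
      with x h1 hx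
    have hx0 : 0 < |x| := abs_pos.2 hx
    simp only [Pi.zero_apply, ENNReal.ofReal_eq_zero] at h1
    exact absurd h1 (not_le.2 (Real.rpow_pos_of_pos hx0 a))
  rw [eventually_false_iff_eq_bot, ae_eq_bot] at this
  exact NeZero.ne _ this

lemma gg_pos {p a : ℝ} (hp : 1 ≤ p) (c ξ δ : ℝ) :
    ∫⁻ x, ‖gg c ξ δ x‖ₑ ^ p ∂(weightMeasure a) ≠ 0 := by
  have hp0 : 0 < p := by linarith
  rw [Ne, lintegral_eq_zero_iff ((gg_measurable _ _ _).enorm.pow_const p)]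
  intro h
  have : ∀ᵐ x ∂(weightMeasure a), False := by
    filter_upwards [h] with x h1
    simp only [Pi.zero_apply, ENNReal.rpow_eq_zero_iff_of_pos hp0, enorm_eq_zero] at h1
    have := gg_norm c ξ δ x
    rw [h1, norm_zero] at this
    exact (Real.exp_pos _).ne this
  rw [eventually_false_iff_eq_bot, ae_eq_bot] at this
  exact weight_ne_zero a this

lemma exp_diff {a b d : ℝ} (h : |a - b| ≤ d) :
    |Real.exp (-a) - Real.exp (-b)| ≤ (Real.exp d - 1) * Real.exp (-b) := by
  have h1 := abs_le.1 h
  rw [abs_le]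
  have hd : Real.exp (-d) * Real.exp d = 1 := by rw [← Real.exp_add]; simp
  have e1 : Real.exp (-a) ≤ Real.exp d * Real.exp (-b) := by
    rw [← Real.exp_add]; exact Real.exp_le_exp.2 (by linarith)
  have e2 : Real.exp (-d) * Real.exp (-b) ≤ Real.exp (-a) := by
    rw [← Real.exp_add]; exact Real.exp_le_exp.2 (by linarith)
  have hb := Real.exp_pos (-b)
  have hd0 : 0 < Real.exp (-d) := Real.exp_pos _
  have h2 : 2 ≤ Real.exp (-d) + Real.exp d := by nlinarith [sq_nonneg (Real.exp (-d) - Real.exp d), Real.exp_pos d]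
  constructor
  · nlinarith
  · nlinarith

lemma gg_diff (c ξ : ℝ) {δ : ℝ} (hδ : 0 < δ) (s : ℝ) {x : ℝ} (hx : x ≠ 0) :
    ‖V c s (gg c ξ δ) x - Complex.exp (-(Complex.I * ξ * s)) * gg c ξ δ x‖ ≤
      (Real.exp (δ * |s|) - 1) * ‖gg c ξ δ x‖ := by
  set L := Real.log x with hL
  have hlog : Real.log (x * Real.exp (-s)) = L - s := by
    rw [Real.log_mul hx (Real.exp_pos _).ne', Real.log_exp]; ring
  have e1 : V c s (gg c ξ δ) x = ((Real.exp (-(c*L)) * Real.exp (-(δ * |L - s|)) : ℝ) : ℂ) *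
      Complex.exp (Complex.I * ξ * (L - s)) := by
    unfold V gg
    rw [hlog, ← mul_assoc, ← Complex.ofReal_mul, ← Real.exp_add, ← Real.exp_add]
    push_cast
    congr 2; ring
  have e2 : Complex.exp (-(Complex.I * ξ * s)) * gg c ξ δ x =
      ((Real.exp (-(c*L)) * Real.exp (-(δ * |L|)) : ℝ) : ℂ) *
      Complex.exp (Complex.I * ξ * (L - s)) := by
    unfold gg
    rw [← hL, mul_left_comm, ← Complex.exp_add, ← Real.exp_add]
    congr 2
    ring
  rw [e1, e2, ← sub_mul, ← Complex.ofReal_sub, norm_mul, Complex.norm_real, Complex.norm_exp, gg_norm,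
    ← hL, ← mul_sub, norm_mul]
  have e3 : (Complex.I * ξ * ((L:ℂ) - s)).re = 0 := by simp
  rw [e3, Real.exp_zero, mul_one, Real.norm_of_nonneg (Real.exp_pos _).le, sub_eq_add_neg (-(c*L)),
    Real.exp_add, mul_left_comm]
  refine mul_le_mul_of_nonneg_left ?_ (Real.exp_pos _).le
  refine exp_diff ?_
  rw [← mul_sub, abs_mul, abs_of_pos hδ]
  refine mul_le_mul_of_nonneg_left ?_ hδ.le
  refine (abs_abs_sub_abs_le _ _).trans ?_
  simp

/-- the defect -/
noncomputable def JJ (k : ℝ → ℂ) (p δ : ℝ) : ℝ≥0∞ :=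
  ∫⁻ s, ‖k s‖ₑ * (min 2 (ENNReal.ofReal (Real.exp (δ * |s|) - 1))) ^ p

lemma JJ_tendsto {k : ℝ → ℂ} (hk : Measurable k) (hki : Integrable k) {p : ℝ} (hp : 1 ≤ p) :
    Tendsto (JJ k p) (𝓝[>] 0) (𝓝 0) := by
  have hp0 : 0 < p := by linarith
  have h2 : (2:ℝ≥0∞) ^ p ≠ ∞ := ENNReal.rpow_ne_top_of_nonneg hp0.le (by simp)
  have := tendsto_lintegral_filter_of_dominated_convergence (μ := volume) (l := 𝓝[>] (0:ℝ))
    (F := fun δ s => ‖k s‖ₑ * (min 2 (ENNReal.ofReal (Real.exp (δ * |s|) - 1))) ^ p)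
    (f := fun _ => 0) (fun s => ‖k s‖ₑ * 2 ^ p) ?_ ?_ ?_ ?_
  · unfold JJ
    simpa only [lintegral_zero] using this
  · refine Eventually.of_forall fun δ => ?_
    fun_prop
  · refine Eventually.of_forall fun δ => Eventually.of_forall fun s => ?_
    gcongr
    exact min_le_left _ _
  · rw [lintegral_mul_const _ hk.enorm]
    exact ENNReal.mul_ne_top hki.2.ne h2
  · refine Eventually.of_forall fun s => ?_
    have hc : Continuous fun δ : ℝ => ‖k s‖ₑ * (min 2 (ENNReal.ofReal (Real.exp (δ * |s|) - 1))) ^ p := by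
      refine ENNReal.continuous_const_mul enorm_ne_top |>.comp ?_
      refine ENNReal.continuous_rpow_const.comp ?_
      refine continuous_const.min ?_
      refine ENNReal.continuous_ofReal.comp ?_
      fun_prop
    have := hc.tendsto 0
    simp only [zero_mul, Real.exp_zero, sub_self, ENNReal.ofReal_zero, zero_le, inf_of_le_right,
      ENNReal.zero_rpow_of_pos hp0, mul_zero] at this
    exact this.mono_left nhdsWithin_le_nhds

lemma weight_ae_ne (a : ℝ) : ∀ᵐ x ∂(weightMeasure a), x ≠ 0 := by
  have : ∀ᵐ x : ℝ, x ≠ 0 := compl_mem_ae_iff.2 (measure_singleton (μ := (volume : Measure ℝ)) 0)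
  exact (withDensity_absolutelyContinuous volume _) this

lemma defect_s {p a : ℝ} (hp : 1 ≤ p) [Fact (1 ≤ ENNReal.ofReal p)] (ξ : ℝ) {δ : ℝ} (hδ : 0 < δ)
    (s : ℝ) :
    ∫⁻ x, ‖V ((a+1)/p) s (gg ((a+1)/p) ξ δ) x -
        Complex.exp (-(Complex.I * ξ * s)) * gg ((a+1)/p) ξ δ x‖ₑ ^ p ∂(weightMeasure a) ≤
      (min 2 (ENNReal.ofReal (Real.exp (δ * |s|) - 1))) ^ p *
        ∫⁻ x, ‖gg ((a+1)/p) ξ δ x‖ₑ ^ p ∂(weightMeasure a) := by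
  have hp0 : 0 < p := by linarith
  have hsc := weight_scale (a := a) hp
  set c := (a+1)/p with hc
  have hgm := gg_measurable c ξ δ
  have hexp : ‖Complex.exp (-(Complex.I * ξ * s))‖ₑ = 1 := by
    rw [← ofReal_norm, Complex.norm_exp]; simp
  rcases min_choice (2:ℝ≥0∞) (ENNReal.ofReal (Real.exp (δ * |s|) - 1)) with h | h <;> rw [h]
  · rw [eLp_pow hp, eLp_pow hp, ← ENNReal.mul_rpow_of_nonneg _ _ hp0.le]
    refine ENNReal.rpow_le_rpow ?_ hp0.le
    refine (eLpNorm_sub_le (V_measurable hgm s).aestronglyMeasurable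
      (hgm.const_mul _).aestronglyMeasurable Fact.out).trans ?_
    rw [hsc.eLp hp s hgm, two_mul]
    gcongr
    refine le_of_eq ?_
    have := eLpNorm_const_smul (Complex.exp (-(Complex.I * ξ * s))) (gg c ξ δ) (ENNReal.ofReal p) (weightMeasure a)
    rw [hexp, one_mul] at this
    exact this
  · rw [← lintegral_const_mul' _ _ (ENNReal.rpow_ne_top_of_nonneg hp0.le (by simp))]
    refine lintegral_mono_ae ?_
    filter_upwards [weight_ae_ne a] with x hx
    rw [← ENNReal.mul_rpow_of_nonneg _ _ hp0.le]
    refine ENNReal.rpow_le_rpow ?_ hp0.le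
    have h0 : 0 ≤ Real.exp (δ * |s|) - 1 := by
      have := Real.one_le_exp (x := δ * |s|) (by positivity)
      linarith
    rw [← ofReal_norm, ← ofReal_norm, ← ENNReal.ofReal_mul h0]
    exact ENNReal.ofReal_le_ofReal (gg_diff c ξ hδ s hx)

lemma mem_spec {p a : ℝ} (hp : 1 ≤ p) [Fact (1 ≤ ENNReal.ofReal p)]
    {k : ℝ → ℂ} (hk : Measurable k) (hki : Integrable k)
    {T : Lp ℂ (ENNReal.ofReal p) (weightMeasure a) →L[ℂ] Lp ℂ (ENNReal.ofReal p) (weightMeasure a)}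
    (hT : ∀ f, T f =ᵐ[weightMeasure a] C ((a+1)/p) k f) (ξ : ℝ) :
    (∫ r : ℝ, k r * Complex.exp (-(Complex.I * ξ * r))) ∈ spectrum ℂ T := by
  have hp0 : 0 < p := by linarith
  have hsc := weight_scale (a := a) hp
  set c := (a+1)/p with hc
  set lam := ∫ r : ℝ, k r * Complex.exp (-(Complex.I * ξ * r)) with hlam
  by_contra hcon
  rw [spectrum.notMem_iff] at hcon
  obtain ⟨B, hB⟩ := hcon.exists_left_inv
  set M := ∫⁻ s, ‖k s‖ₑ with hM
  have hMf : M ≠ ∞ := hki.2.ne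
  have key : ∀ δ > 0, 1 ≤ ‖B‖ₑ ^ p * M ^ (p - 1) * JJ k p δ := by
    intro δ hδ
    have hgm := gg_measurable c ξ δ
    have hmem : MemLp (gg c ξ δ) (ENNReal.ofReal p) (weightMeasure a) := by
      refine ⟨hgm.aestronglyMeasurable, ?_⟩
      rw [eLp_eq hp]
      exact (ENNReal.rpow_ne_top_of_nonneg (by positivity) (gg_fin hp ξ hδ)).lt_top
    let G := hmem.toLp
    set N := ∫⁻ x, ‖gg c ξ δ x‖ₑ ^ p ∂(weightMeasure a) with hN
    have hGN : ‖G‖ₑ ^ p = N := by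
      rw [Lp.enorm_def, eLpNorm_congr_ae hmem.coeFn_toLp, ← eLp_pow hp]
    let D := algebraMap ℂ _ lam - T
    have hBD : B (D G) = G := by
      have := congrArg (fun S => S G) hB
      exact this
    have h1 : ‖G‖ₑ ≤ ‖B‖ₑ * ‖D G‖ₑ := by
      nth_rewrite 1 [← hBD]
      exact B.le_opENorm _
    have hDG : ⇑(D G) =ᵐ[weightMeasure a] fun x => -∫ s, k s * (V c s (gg c ξ δ) x -
        Complex.exp (-(Complex.I * ξ * s)) * gg c ξ δ x) := by
      have hTG : T G =ᵐ[weightMeasure a] C c k (gg c ξ δ) :=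
        (hT G).trans (hsc.C_congr k (Lp_meas G) hgm hmem.coeFn_toLp)
      have hintg : ∀ᵐ x ∂(weightMeasure a), Integrable fun s => k s * V c s (gg c ξ δ) x := by
        have h3 := hsc.ae_integrable hp hk hki G
        have h4 : ∀ᵐ x ∂(weightMeasure a), ∀ᵐ s, V c s G x = V c s (gg c ξ δ) x :=
          (Measure.ae_ae_comm (μ := volume) (ν := weightMeasure a)
            (p := fun s x => V c s G x = V c s (gg c ξ δ) x)
            (measurableSet_eq_fun ((V_measurable2 (Lp_meas G)).comp measurable_swap)
            ((V_measurable2 hgm).comp measurable_swap))).1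
            (Eventually.of_forall fun s => hsc.congr s hmem.coeFn_toLp)
        filter_upwards [h3, h4] with x h5 h6
        refine h5.congr ?_
        filter_upwards [h6] with s hs
        rw [hs]
      have hDe : D G = lam • G - T G := by
        simp [D, Algebra.algebraMap_eq_smul_one]
      rw [hDe]
      filter_upwards [Lp.coeFn_sub (lam • G) (T G), Lp.coeFn_smul lam G, hmem.coeFn_toLp, hTG, hintg]
        with x h2 h3 h4 h5 h6
      have hi2 : Integrable fun s : ℝ => k s * Complex.exp (-(Complex.I * ξ * s)) * gg c ξ δ x := by
        refine Integrable.mul_const ?_ _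
        refine hki.mul_bdd (c := 1) (by fun_prop) (Eventually.of_forall fun s => ?_)
        rw [Complex.norm_exp]; simp
      rw [h2, Pi.sub_apply, h3, Pi.smul_apply, h5, h4, smul_eq_mul, hlam, ← integral_mul_const]
      simp_rw [mul_sub, ← mul_assoc]
      rw [integral_sub h6 hi2]
      simp only [C]; ring
    have h2 : ‖D G‖ₑ ^ p ≤ M ^ (p - 1) * (JJ k p δ * N) := by
      rw [Lp.enorm_def, eLpNorm_congr_ae hDG, ← eLp_pow hp]
      have hGm : Measurable fun z : ℝ × ℝ => ‖V c z.2 (gg c ξ δ) z.1 -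
        Complex.exp (-(Complex.I * ξ * z.2)) * gg c ξ δ z.1‖ₑ := by
        have := V_measurable2 (c := c) hgm
        fun_prop
      calc _ ≤ ∫⁻ x, (∫⁻ s, ‖k s‖ₑ * ‖V c s (gg c ξ δ) x -
            Complex.exp (-(Complex.I * ξ * s)) * gg c ξ δ x‖ₑ) ^ p ∂(weightMeasure a) := by
            refine lintegral_mono fun x => ENNReal.rpow_le_rpow ?_ hp0.le
            rw [enorm_neg]
            refine (enorm_integral_le_lintegral_enorm _).trans (le_of_eq ?_)
            simp_rw [enorm_mul]
        _ ≤ _ := jensen hp hk hki hGm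
        _ ≤ M ^ (p - 1) * ∫⁻ s, (‖k s‖ₑ * (min 2 (ENNReal.ofReal (Real.exp (δ * |s|) - 1))) ^ p) * N := by
            refine mul_le_mul' le_rfl (lintegral_mono fun s => ?_)
            simp only [mul_assoc]
            exact mul_le_mul' le_rfl (by simpa only [mul_assoc] using defect_s hp ξ hδ s)
        _ = _ := by
            rw [lintegral_mul_const _ (by fun_prop)]; rfl
    have h3 : 1 * N ≤ (‖B‖ₑ ^ p * M ^ (p - 1) * JJ k p δ) * N := by
      rw [one_mul]
      calc N = ‖G‖ₑ ^ p := hGN.symm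
        _ ≤ (‖B‖ₑ * ‖D G‖ₑ) ^ p := ENNReal.rpow_le_rpow h1 hp0.le
        _ = ‖B‖ₑ ^ p * ‖D G‖ₑ ^ p := ENNReal.mul_rpow_of_nonneg _ _ hp0.le
        _ ≤ ‖B‖ₑ ^ p * (M ^ (p - 1) * (JJ k p δ * N)) := by gcongr
        _ = _ := by ring
    exact (ENNReal.mul_le_mul_iff_left (gg_pos hp c ξ δ) (gg_fin hp ξ hδ)).1 h3
  have hlim : Tendsto (fun δ => ‖B‖ₑ ^ p * M ^ (p - 1) * JJ k p δ) (𝓝[>] 0) (𝓝 0) := by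
    have := ENNReal.Tendsto.const_mul (a := ‖B‖ₑ ^ p * M ^ (p - 1)) (JJ_tendsto hk hki hp)
      (Or.inr (ENNReal.mul_ne_top (ENNReal.rpow_ne_top_of_nonneg hp0.le enorm_ne_top)
        (ENNReal.rpow_ne_top_of_nonneg (by linarith) hMf)))
    simpa using this
  have := ge_of_tendsto hlim (eventually_mem_nhdsWithin.mono fun δ hδ => key δ hδ)
  simp at this

end HausSpec

/-- For `1 ≤ p < ∞`, `a > −1` and `φ` measurable with
`∫₀^∞ |φ(t)| t^{(a+1)/p − 1} dt < ∞`, the spectrum of the induced bounded operator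
`T f = H_φ f` on `L^p(ℝ, |x|^a)` equals the closure of `{ k̂_{a,p}(ξ) : ξ ∈ ℝ }`. -/
theorem stmt6 (p a : ℝ) (hp : 1 ≤ p) (ha : -1 < a) [Fact (1 ≤ ENNReal.ofReal p)]
    (φ : ℝ → ℂ) (hφm : Measurable φ)
    (hφ : IntegrableOn (fun t => ‖φ t‖ * t ^ ((a + 1) / p - 1)) (Set.Ioi (0 : ℝ)))
    (T : Lp ℂ (ENNReal.ofReal p) (weightMeasure a) →L[ℂ]
         Lp ℂ (ENNReal.ofReal p) (weightMeasure a))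
    (hT : ∀ f : Lp ℂ (ENNReal.ofReal p) (weightMeasure a),
      ⇑(T f) =ᵐ[weightMeasure a] Hphi φ ⇑f) :
    spectrum ℂ T = closure (Set.range (khat φ ((a + 1) / p))) := by
  have hT' : ∀ f, T f =ᵐ[weightMeasure a] HausSpec.C ((a+1)/p) (HausSpec.ker φ ((a+1)/p)) f := by
    intro f
    refine (hT f).trans (Filter.Eventually.of_forall fun x => ?_)
    exact HausSpec.Hphi_eq φ f _ x
  have hk := HausSpec.ker_measurable hφm ((a+1)/p)
  have hki := HausSpec.ker_integrable hφm ((a+1)/p) hφ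
  have hr : khat φ ((a + 1) / p) = fun ξ : ℝ => ∫ r : ℝ, HausSpec.ker φ ((a+1)/p) r *
      Complex.exp (-(Complex.I * ξ * r)) := funext fun ξ => HausSpec.khat_eq φ _ ξ
  rw [hr]
  apply Set.Subset.antisymm
  · exact HausSpec.spec_sub (HausSpec.weight_scale hp) hp hk hki hT'
  · refine closure_minimal ?_ (spectrum.isClosed T)
    rintro _ ⟨ξ, rfl⟩
    exact HausSpec.mem_spec hp hk hki hT' ξ
end

section
/- Let a > −1 and let φ : (0,∞) → ℂ be measurable with ∫₀^∞ |φ(t)| t^{(a+1)/2 − 1} dt < ∞. Then the operator norm of the Hausdorff operator H_φ on L²(ℝ, |x|^a) equals sup_{ξ ∈ ℝ} |k̂_{a,2}(ξ)|, where k̂_{a,2}(ξ) = ∫₀^∞ φ(t) t^{(a+1)/2 − 1 − iξ} dt. -/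
open MeasureTheory

section helpers

open FourierTransform Real
open scoped ENNReal Convolution ContDiff

theorem planch_ae {F : ℝ → ℂ} (h1 : Integrable F) (h2 : MemLp F 2) :
    (𝓕 (h2.toLp F) : Lp ℂ 2 (volume : Measure ℝ)) =ᵐ[volume] (𝓕 F : ℝ → ℂ) := by
  have hc : Continuous (𝓕 F : ℝ → ℂ) := by
    exact VectorFourier.fourierIntegral_continuous Real.continuous_fourierChar
      (by fun_prop) h1
  apply ae_eq_of_integral_contDiff_smul_eq
  · exact (Lp.memLp _).locallyIntegrable (by norm_num)
  · exact hc.locallyIntegrable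
  intro g hg hgc
  let g' : ℝ → ℂ := fun x => (g x : ℂ)
  have hg' : ContDiff ℝ ∞ g' := Complex.ofRealCLM.contDiff.comp hg
  have hgc' : HasCompactSupport g' := hgc.comp_left (g := fun x : ℝ => (x : ℂ)) (by simp)
  let S : SchwartzMap ℝ ℂ := hgc'.toSchwartzMap hg'
  have hS : ∀ x, S x = g x := fun x => rfl
  have e := congrArg (fun D => D S) (Lp.fourier_toTemperedDistribution_eq (h2.toLp F))
  simp only [TemperedDistribution.fourier_apply, Lp.toTemperedDistribution_apply] at e
  calc _ = ∫ x, S x • (𝓕 (h2.toLp F) : Lp ℂ 2 (volume : Measure ℝ)) x := by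
        simp [hS]
    _ = ∫ x, (𝓕 S) x • (h2.toLp F) x := e.symm
    _ = ∫ x, (𝓕 S) x • F x := by
        apply integral_congr_ae
        filter_upwards [h2.coeFn_toLp] with x hx
        rw [hx]
    _ = ∫ x, S x • 𝓕 F x := by
        have := VectorFourier.integral_fourierIntegral_smul_eq_flip (L := innerₗ ℝ) (f := S) (g := F)
          (μ := volume) (ν := volume) Real.continuous_fourierChar (by fun_prop) S.integrable h1
        simp only [flip_innerₗ] at this
        exact this
    _ = _ := by simp [hS]

theorem planch {F : ℝ → ℂ} (h1 : Integrable F) (h2 : MemLp F 2) :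
    eLpNorm (𝓕 F : ℝ → ℂ) 2 = eLpNorm F 2 := by
  rw [← eLpNorm_congr_ae (planch_ae h1 h2), ← eLpNorm_congr_ae h2.coeFn_toLp]
  have := Lp.norm_fourier_eq (h2.toLp F)
  rw [Lp.norm_def, Lp.norm_def] at this
  exact (ENNReal.toReal_eq_toReal_iff' (Lp.eLpNorm_ne_top _) (Lp.eLpNorm_ne_top _)).1 this

theorem conv_bound {k F : ℝ → ℂ} (hk : Integrable k) (h1 : Integrable F) (h2 : MemLp F 2)
    {M : ℝ} (hM : ∀ ξ, ‖𝓕 k ξ‖ ≤ M) (hG : MemLp (fun u => ∫ s, F (u - s) * k s) 2) :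
    eLpNorm (fun u => ∫ s, F (u - s) * k s) 2 ≤ ENNReal.ofReal M * eLpNorm F 2 := by
  have e : (fun u => ∫ s, F (u - s) * k s) = k ⋆[ContinuousLinearMap.mul ℂ ℂ] F := by
    ext u
    simp only [convolution_def, ContinuousLinearMap.mul_apply', mul_comm]
  rw [e] at hG ⊢
  rw [← planch (hk.integrable_convolution _ h1) hG, ← planch h1 h2]
  apply eLpNorm_le_mul_eLpNorm_of_ae_le_mul
  refine Filter.Eventually.of_forall fun ξ => ?_
  rw [Real.fourier_mul_convolution_eq hk h1, norm_mul]
  gcongr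
  exact hM ξ

/-- logarithmic change of variables -/
noncomputable def tr (c σ : ℝ) (g : ℝ → ℂ) (u : ℝ) : ℂ := (rexp (c * u) : ℂ) * g (σ * rexp u)

noncomputable def kk (φ : ℝ → ℂ) (c s : ℝ) : ℂ := (rexp (c * s) : ℂ) * φ (rexp s)

theorem integral_exp_cv (h : ℝ → ℂ) :
    ∫ t in Set.Ioi (0 : ℝ), h t = ∫ s, (rexp s : ℂ) * h (rexp s) := by
  have := integral_image_eq_integral_abs_deriv_smul (s := Set.univ) (f := rexp) (f' := rexp)
    MeasurableSet.univ (fun x _ => (Real.hasDerivAt_exp x).hasDerivWithinAt)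
    Real.exp_injective.injOn h
  simpa [Set.image_univ, Real.range_exp, abs_of_pos (Real.exp_pos _)] using this

theorem khat_eq (φ : ℝ → ℂ) (c ξ : ℝ) :
    khat φ c ξ = ∫ s, kk φ c s * Complex.exp (-(ξ * s : ℝ) * Complex.I) := by
  rw [khat, integral_exp_cv]
  congr 1 with s
  rw [kk, Complex.ofReal_exp, Complex.cpow_def_of_ne_zero (Complex.exp_ne_zero _),
    ← Complex.ofReal_exp, ← Complex.ofReal_log (Real.exp_pos _).le, Real.log_exp,
    Complex.ofReal_exp, Complex.ofReal_exp]
  rw [mul_left_comm, ← Complex.exp_add, mul_right_comm, ← Complex.exp_add, mul_comm]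
  congr 2
  push_cast
  ring

theorem khat_fourier (φ : ℝ → ℂ) (c ξ : ℝ) :
    𝓕 (kk φ c) ξ = khat φ c (2 * π * ξ) := by
  rw [khat_eq, Real.fourier_real_eq_integral_exp_smul]
  congr 1 with s
  rw [smul_eq_mul, mul_comm]
  congr 3
  push_cast
  ring

theorem kk_integrable (φ : ℝ → ℂ) (c : ℝ) (hφm : Measurable φ)
    (hφ : IntegrableOn (fun t => ‖φ t‖ * t ^ (c - 1)) (Set.Ioi (0 : ℝ))) :
    Integrable (kk φ c) := by
  have := (integrableOn_image_iff_integrableOn_abs_deriv_smul (s := Set.univ) (f := rexp)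
    (f' := rexp) MeasurableSet.univ (fun x _ => (Real.hasDerivAt_exp x).hasDerivWithinAt)
    Real.exp_injective.injOn (fun t => ‖φ t‖ * t ^ (c - 1))).1
    (by simpa [Set.image_univ, Real.range_exp] using hφ)
  rw [integrableOn_univ] at this
  refine this.mono' ?_ (Filter.Eventually.of_forall fun s => ?_)
  · apply Measurable.aestronglyMeasurable
    unfold kk
    fun_prop
  · rw [kk, norm_mul, Complex.norm_real, Real.norm_of_nonneg (Real.exp_pos _).le,
      abs_of_pos (Real.exp_pos _), smul_eq_mul, ← Real.exp_mul, mul_left_comm, ← Real.exp_add,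
      mul_comm]
    apply le_of_eq
    congr 2
    ring

theorem tr_Hphi (φ f : ℝ → ℂ) (c σ u : ℝ) :
    tr c σ (Hphi φ f) u = ∫ s, tr c σ f (u - s) * kk φ c s := by
  rw [tr, Hphi, integral_exp_cv, ← integral_const_mul]
  congr 1 with s
  have h : σ * rexp u / rexp s = σ * rexp (u - s) := by rw [Real.exp_sub]; ring
  rw [h, tr, kk, mul_sub, Real.exp_sub (c * u)]
  have := Complex.exp_ne_zero s
  have := Complex.exp_ne_zero (c * s)
  push_cast
  field_simp

theorem lint_cv (a : ℝ) (g : ℝ → ℝ≥0∞) (hg : Measurable g) :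
    ∫⁻ x, g x ∂(weightMeasure a) =
      (∫⁻ u, ENNReal.ofReal (rexp ((a + 1) * u)) * g (1 * rexp u))
      + ∫⁻ u, ENNReal.ofReal (rexp ((a + 1) * u)) * g (-1 * rexp u) := by
  rw [weightMeasure, lintegral_withDensity_eq_lintegral_mul _ (by fun_prop) hg,
    ← lintegral_add_compl _ (measurableSet_Ioi (a := (0 : ℝ)))]
  congr 1
  · have := lintegral_image_eq_lintegral_abs_deriv_mul (s := Set.univ) (f := rexp)
      (f' := rexp) MeasurableSet.univ (fun x _ => (Real.hasDerivAt_exp x).hasDerivWithinAt)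
      Real.exp_injective.injOn ((fun x => ENNReal.ofReal (|x| ^ a)) * g)
    rw [Set.image_univ, Real.range_exp] at this
    rw [this, setLIntegral_univ]
    congr 1 with u
    rw [Pi.mul_apply, ← mul_assoc, abs_of_pos (Real.exp_pos _), ← ENNReal.ofReal_mul (by positivity),
      ← Real.exp_mul, ← Real.exp_add, one_mul]
    congr 3
    ring
  · have := lintegral_image_eq_lintegral_abs_deriv_mul (s := Set.univ) (f := fun x => - rexp x)
      (f' := fun x => -rexp x) MeasurableSet.univ
      (fun x _ => (Real.hasDerivAt_exp x).neg.hasDerivWithinAt)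
      (fun x _ y _ h => Real.exp_injective (neg_injective h)) ((fun x => ENNReal.ofReal (|x| ^ a)) * g)
    have e : (fun x => - rexp x) '' Set.univ = Set.Iio 0 := by
      ext y
      simp only [Set.image_univ, Set.mem_range, Set.mem_Iio]
      constructor
      · rintro ⟨x, rfl⟩
        simpa using Real.exp_pos x
      · intro hy
        exact ⟨Real.log (-y), by rw [Real.exp_log (by linarith)]; ring⟩
    rw [Set.compl_Ioi, ← restrict_Iio_eq_restrict_Iic, ← e, this, setLIntegral_univ]
    congr 1 with u
    rw [Pi.mul_apply, ← mul_assoc, abs_neg, abs_of_pos (Real.exp_pos _),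
      ← ENNReal.ofReal_mul (by positivity),
      ← Real.exp_mul, ← Real.exp_add, neg_one_mul]
    congr 3
    ring

theorem ae_cv (a : ℝ) (p : ℝ → Prop) (h : ∀ᵐ x ∂(weightMeasure a), p x) :
    (∀ᵐ u : ℝ, p (1 * rexp u)) ∧ (∀ᵐ u : ℝ, p (-1 * rexp u)) := by
  obtain ⟨N, hN, hNm, hN0⟩ := exists_measurable_superset_of_null (ae_iff.1 h)
  have h1 := lint_cv a (N.indicator 1) (measurable_one.indicator hNm)
  rw [lintegral_indicator_one hNm, hN0] at h1
  have key : ∀ σ : ℝ, ∫⁻ u, ENNReal.ofReal (rexp ((a + 1) * u)) * N.indicator 1 (σ * rexp u) = 0 →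
      ∀ᵐ u : ℝ, p (σ * rexp u) := by
    intro σ h
    rw [lintegral_eq_zero_iff] at h
    · filter_upwards [h] with u hu
      by_contra hp
      have : σ * rexp u ∈ N := hN hp
      simp [this] at hu
      exact absurd hu (not_le.2 (Real.exp_pos _))
    · refine Measurable.mul (by fun_prop) ((measurable_one.indicator hNm).comp (by fun_prop))
  obtain ⟨ha, hb⟩ := add_eq_zero.1 h1.symm
  exact ⟨key _ ha, key _ hb⟩

theorem sq_norm {μ : Measure ℝ} (g : ℝ → ℂ) : eLpNorm g 2 μ ^ 2 = ∫⁻ x, ‖g x‖ₑ ^ 2 ∂μ := by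
  have := eLpNorm_nnreal_pow_eq_lintegral (μ := μ) (f := g) (p := 2) (by norm_num)
  simpa using this

theorem tr_meas {c σ : ℝ} {g : ℝ → ℂ} (hg : Measurable g) : Measurable (tr c σ g) := by
  unfold tr
  fun_prop

theorem norm_cv (a : ℝ) (g : ℝ → ℂ) (hg : Measurable g) :
    eLpNorm g 2 (weightMeasure a) ^ 2 =
      eLpNorm (tr ((a + 1) / 2) 1 g) 2 ^ 2 + eLpNorm (tr ((a + 1) / 2) (-1) g) 2 ^ 2 := by
  rw [sq_norm, sq_norm, sq_norm, lint_cv a _ (by fun_prop)]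
  have : ∀ u : ℝ, ENNReal.ofReal (rexp ((a + 1) * u)) = ‖(rexp ((a + 1) / 2 * u) : ℂ)‖ₑ ^ 2 := by
    intro u
    rw [← ofReal_norm, Complex.norm_real, Real.norm_of_nonneg (Real.exp_pos _).le,
      ← ENNReal.ofReal_pow (Real.exp_pos _).le, ← Real.exp_nat_mul]
    congr 2
    push_cast
    ring
  simp only [tr, enorm_mul, mul_pow, this]

theorem tr_memLp {a : ℝ} {g : ℝ → ℂ} (hg : Measurable g) (h : MemLp g 2 (weightMeasure a)) :
    MemLp (tr ((a + 1) / 2) 1 g) 2 ∧ MemLp (tr ((a + 1) / 2) (-1) g) 2 := by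
  have e := norm_cv a g hg
  have hfin : eLpNorm g 2 (weightMeasure a) ^ 2 ≠ ⊤ := ENNReal.pow_ne_top h.2.ne
  rw [e] at hfin
  obtain ⟨h1, h2⟩ := ENNReal.add_ne_top.1 hfin
  refine ⟨⟨(tr_meas hg).aestronglyMeasurable, ?_⟩, ⟨(tr_meas hg).aestronglyMeasurable, ?_⟩⟩
  · exact lt_top_iff_ne_top.2 fun h => h1 (by simp [h])
  · exact lt_top_iff_ne_top.2 fun h => h2 (by simp [h])

theorem T_conv {a : ℝ} {φ : ℝ → ℂ} {f Tf : ℝ → ℂ}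
    (hT : Tf =ᵐ[weightMeasure a] Hphi φ f) :
    (tr ((a + 1) / 2) 1 Tf =ᵐ[volume]
      fun u => ∫ s, tr ((a + 1) / 2) 1 f (u - s) * kk φ ((a + 1) / 2) s) ∧
    (tr ((a + 1) / 2) (-1) Tf =ᵐ[volume]
      fun u => ∫ s, tr ((a + 1) / 2) (-1) f (u - s) * kk φ ((a + 1) / 2) s) := by
  obtain ⟨h1, h2⟩ := ae_cv a _ hT
  constructor
  · filter_upwards [h1] with u hu
    rw [← tr_Hphi, tr, tr, hu]
  · filter_upwards [h2] with u hu
    rw [← tr_Hphi, tr, tr, hu]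

theorem T_bound {a : ℝ} {φ : ℝ → ℂ} {f Tf : ℝ → ℂ} (hf : Measurable f) (hTf : Measurable Tf)
    (h2f : MemLp f 2 (weightMeasure a)) (h2T : MemLp Tf 2 (weightMeasure a))
    (hk : Integrable (kk φ ((a + 1) / 2)))
    (hT : Tf =ᵐ[weightMeasure a] Hphi φ f)
    (hi1 : Integrable (tr ((a + 1) / 2) 1 f)) (hi2 : Integrable (tr ((a + 1) / 2) (-1) f))
    {M : ℝ} (hM : ∀ ξ, ‖khat φ ((a + 1) / 2) ξ‖ ≤ M) :
    eLpNorm Tf 2 (weightMeasure a) ≤ ENNReal.ofReal M * eLpNorm f 2 (weightMeasure a) := by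
  rw [← ENNReal.pow_le_pow_left_iff (n := 2) (by norm_num), mul_pow, norm_cv a _ hf,
    norm_cv a _ hTf]
  obtain ⟨e1, e2⟩ := T_conv hT
  obtain ⟨m1, m2⟩ := tr_memLp hf h2f
  obtain ⟨t1, t2⟩ := tr_memLp hTf h2T
  have hM' : ∀ ξ, ‖𝓕 (kk φ ((a + 1) / 2)) ξ‖ ≤ M := fun ξ => by
    rw [khat_fourier]; exact hM _
  rw [eLpNorm_congr_ae e1, eLpNorm_congr_ae e2, mul_add, ← mul_pow, ← mul_pow]
  gcongr
  · exact conv_bound hk hi1 m1 hM' ((memLp_congr_ae e1).1 t1)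
  · exact conv_bound hk hi2 m2 hM' ((memLp_congr_ae e2).1 t2)

def An (n : ℕ) : Set ℝ := {x | |Real.log x| ≤ n}

theorem An_meas (n : ℕ) : MeasurableSet (An n) := by
  unfold An
  exact measurableSet_le (by fun_prop) measurable_const

theorem tr_An {c σ : ℝ} (hσ : σ = 1 ∨ σ = -1) (f : ℝ → ℂ) (n : ℕ) :
    tr c σ ((An n).indicator f) = (Set.Icc (-(n : ℝ)) n).indicator (tr c σ f) := by
  ext u
  have : σ * rexp u ∈ An n ↔ u ∈ Set.Icc (-(n : ℝ)) n := by
    have : Real.log (σ * rexp u) = u := by rcases hσ with rfl | rfl <;> simp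
    rw [An, Set.mem_ofPred_eq, this, abs_le, Set.mem_Icc]
  by_cases h : u ∈ Set.Icc (-(n : ℝ)) n
  · rw [Set.indicator_of_mem h, tr, Set.indicator_of_mem (this.2 h), tr]
  · rw [Set.indicator_of_notMem h, tr, Set.indicator_of_notMem (fun h' => h (this.1 h')), mul_zero]

theorem trunc_tendsto {μ : Measure ℝ} {f : ℝ → ℂ} (hfm : Measurable f) (hf : MemLp f 2 μ) :
    Filter.Tendsto (fun n => eLpNorm ((An n).indicator f - f) 2 μ) Filter.atTop (nhds 0) := by
  have h : Filter.Tendsto (fun n => eLpNorm ((An n).indicator f - f) 2 μ ^ 2) Filter.atTop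
      (nhds 0) := by
    simp_rw [sq_norm]
    have := tendsto_lintegral_of_dominated_convergence (μ := μ)
      (F := fun n x => ‖((An n).indicator f - f) x‖ₑ ^ 2) (f := fun _ => 0)
      (fun x => ‖f x‖ₑ ^ 2) ?_ ?_ ?_ ?_
    · simpa using this
    · intro n
      have : Measurable ((An n).indicator f - f) := (hfm.indicator (An_meas n)).sub hfm
      fun_prop
    · intro n
      refine Filter.Eventually.of_forall fun x => ?_
      by_cases hx : x ∈ An n <;> simp [hx]
    · rw [← sq_norm]
      exact ENNReal.pow_ne_top hf.2.ne
    · refine Filter.Eventually.of_forall fun x => ?_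
      refine tendsto_const_nhds.congr' ?_
      obtain ⟨N, hN⟩ := exists_nat_ge |Real.log x|
      filter_upwards [Filter.eventually_ge_atTop N] with n hn
      have : x ∈ An n := hN.trans (by exact_mod_cast hn)
      simp [this]
  have h2 := ((ENNReal.continuous_rpow_const (y := (1/2 : ℝ))).tendsto 0).comp h
  rw [ENNReal.zero_rpow_of_pos (by norm_num)] at h2
  refine h2.congr fun n => ?_
  simp only [Function.comp]
  rw [← ENNReal.rpow_natCast, ← ENNReal.rpow_mul]
  norm_num

theorem upper (a : ℝ) (φ : ℝ → ℂ)
    (hk : Integrable (kk φ ((a + 1) / 2)))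
    (T : Lp ℂ 2 (weightMeasure a) →L[ℂ] Lp ℂ 2 (weightMeasure a))
    (hT : ∀ f : Lp ℂ 2 (weightMeasure a), ⇑(T f) =ᵐ[weightMeasure a] Hphi φ ⇑f)
    {M : ℝ} (hM0 : 0 ≤ M) (hM : ∀ ξ, ‖khat φ ((a + 1) / 2) ξ‖ ≤ M) : ‖T‖ ≤ M := by
  refine T.opNorm_le_bound hM0 fun f => ?_
  have hfm : Measurable f := (Lp.stronglyMeasurable f).measurable
  have hmem : ∀ n, MemLp ((An n).indicator f) 2 (weightMeasure a) := fun n =>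
    (Lp.memLp f).indicator (An_meas n)
  have hlim : Filter.Tendsto (fun n => (hmem n).toLp _) Filter.atTop (nhds f) := by
    rw [Lp.tendsto_Lp_iff_tendsto_eLpNorm']
    refine (trunc_tendsto hfm (Lp.memLp f)).congr fun n => ?_
    apply eLpNorm_congr_ae
    filter_upwards [(hmem n).coeFn_toLp] with x hx
    simp only [Pi.sub_apply, hx]
  refine le_of_tendsto_of_tendsto ((T.continuous.tendsto f).comp hlim).norm
    (hlim.norm.const_mul M) (Filter.Eventually.of_forall fun n => ?_)
  simp only [Function.comp]
  set g := (hmem n).toLp _ with hg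
  have hae : g =ᵐ[weightMeasure a] (An n).indicator f := (hmem n).coeFn_toLp
  obtain ⟨e1, e2⟩ := ae_cv a _ hae
  obtain ⟨m1, m2⟩ := tr_memLp hfm (Lp.memLp f)
  have hInt : ∀ σ : ℝ, (σ = 1 ∨ σ = -1) → MemLp (tr ((a + 1) / 2) σ f) 2 →
      (∀ᵐ u : ℝ, g (σ * rexp u) = (An n).indicator f (σ * rexp u)) →
      Integrable (tr ((a + 1) / 2) σ g) := by
    intro σ hσ hm he
    have e : tr ((a + 1) / 2) σ g =ᵐ[volume] tr ((a + 1) / 2) σ ((An n).indicator f) := by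
      filter_upwards [he] with u hu
      rw [tr, tr, hu]
    rw [integrable_congr e, tr_An hσ, integrable_indicator_iff measurableSet_Icc]
    exact (hm.restrict _).integrable (by norm_num)
  have b := T_bound (Lp.stronglyMeasurable g).measurable (Lp.stronglyMeasurable (T g)).measurable
    (Lp.memLp g) (Lp.memLp (T g)) hk (hT g) (hInt 1 (by simp) m1 e1) (hInt (-1) (by simp) m2 e2) hM
  rw [Lp.norm_def, Lp.norm_def]
  have := ENNReal.toReal_mono (ENNReal.mul_ne_top ENNReal.ofReal_ne_top (Lp.eLpNorm_ne_top g)) b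
  rwa [ENNReal.toReal_mul, ENNReal.toReal_ofReal hM0] at this

/-- indicator of `[0,n]`, complex valued -/
noncomputable def JJ (n : ℕ) (u : ℝ) : ℂ := (Set.Icc (0 : ℝ) n).indicator 1 u

theorem JJ_meas (n : ℕ) : Measurable (JJ n) := measurable_one.indicator measurableSet_Icc

theorem JJ_norm_le (n : ℕ) (u : ℝ) : ‖JJ n u‖ ≤ 1 := by
  by_cases h : u ∈ Set.Icc (0 : ℝ) n <;> simp only [JJ, h, Set.indicator_of_mem,
    Set.indicator_of_notMem, not_false_eq_true, Pi.one_apply, norm_one, norm_zero, le_refl,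
    zero_le_one]

theorem JJ_int (n : ℕ) : Integrable (JJ n) := by
  unfold JJ
  rw [integrable_indicator_iff measurableSet_Icc]
  exact integrableOn_const (by simp)

theorem JJ_overlap (n : ℕ) (s : ℝ) :
    ∫ u, JJ n u * JJ n (u - s) = ((max (min (n : ℝ) (n + s) - max 0 s) 0 : ℝ) : ℂ) := by
  have e : (fun u => JJ n u * JJ n (u - s)) =
      (Set.Icc (max 0 s) (min (n : ℝ) (n + s))).indicator (fun _ => (1 : ℂ)) := by
    ext u
    simp only [JJ, Set.indicator_apply, Set.mem_Icc, Pi.one_apply, max_le_iff, le_min_iff,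
      sub_nonneg, sub_le_iff_le_add]
    split_ifs <;> simp_all
  rw [e, integral_indicator measurableSet_Icc, integral_const]
  rw [Measure.real, Measure.restrict_apply_univ, Real.volume_Icc]
  rw [ENNReal.toReal_ofReal']
  simp

theorem fubini_JJ {k : ℝ → ℂ} (hk : Integrable k) (n : ℕ) :
    ∫ u, JJ n u * ∫ s, JJ n (u - s) * k s =
      ∫ s, k s * ((max (min (n : ℝ) (n + s) - max 0 s) 0 : ℝ) : ℂ) := by
  simp_rw [← integral_const_mul]
  rw [integral_integral_swap]
  · congr 1 with s
    rw [← JJ_overlap, ← integral_const_mul]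
    congr 1 with u
    ring
  · refine ((JJ_int n).mul_prod hk).mono ?_ ?_
    · have h1 : AEStronglyMeasurable (fun p : ℝ × ℝ => k p.2) (volume.prod volume) :=
        hk.1.comp_snd
      have h2 : Measurable fun p : ℝ × ℝ => JJ n p.1 := (JJ_meas n).comp measurable_fst
      have h3 : Measurable fun p : ℝ × ℝ => JJ n (p.1 - p.2) :=
        (JJ_meas n).comp (measurable_fst.sub measurable_snd)
      exact h2.aestronglyMeasurable.mul (h3.aestronglyMeasurable.mul h1)
    · refine Filter.Eventually.of_forall fun p => ?_
      simp only [Function.uncurry, norm_mul]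
      have := JJ_norm_le n (p.1 - p.2)
      gcongr
      exact mul_le_of_le_one_left (norm_nonneg _) this

theorem overlap_tendsto {k : ℝ → ℂ} (hk : Integrable k) :
    Filter.Tendsto (fun n : ℕ => (n : ℂ)⁻¹ *
      ∫ s, k s * ((max (min (n : ℝ) (n + s) - max 0 s) 0 : ℝ) : ℂ)) Filter.atTop
      (nhds (∫ s, k s)) := by
  simp_rw [← integral_const_mul]
  refine tendsto_integral_filter_of_dominated_convergence (fun s => ‖k s‖) ?_ ?_ hk.norm ?_
  · refine Filter.Eventually.of_forall fun n => ?_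
    refine (hk.1.mul ?_).const_mul _
    exact Continuous.aestronglyMeasurable (by fun_prop)
  · refine Filter.Eventually.of_forall fun n => Filter.Eventually.of_forall fun s => ?_
    rw [mul_left_comm, norm_mul]
    refine mul_le_of_le_one_right (norm_nonneg _) ?_
    rw [norm_mul, norm_inv, Complex.norm_natCast, Complex.norm_real,
      Real.norm_of_nonneg (le_max_right _ _)]
    have hn : (0 : ℝ) ≤ n := Nat.cast_nonneg n
    have : max (min (n : ℝ) (n + s) - max 0 s) 0 ≤ n := by
      refine max_le ?_ hn
      have := min_le_left (n : ℝ) (n + s)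
      have := le_max_left 0 s
      linarith
    rw [inv_mul_eq_div]
    exact div_le_one_of_le₀ this hn
  · refine Filter.Eventually.of_forall fun s => ?_
    have h1 : Filter.Tendsto (fun n : ℕ => (1 : ℝ) - (n : ℝ)⁻¹ * |s|) Filter.atTop (nhds 1) := by
      have := (tendsto_inv_atTop_nhds_zero_nat (𝕜 := ℝ)).mul_const |s|
      simpa using this.const_sub 1
    have h2 : Filter.Tendsto (fun n : ℕ => k s * (((1 : ℝ) - (n : ℝ)⁻¹ * |s| : ℝ) : ℂ))
        Filter.atTop (nhds (k s)) := by
      simpa using (((Complex.continuous_ofReal.tendsto 1).comp h1).const_mul (k s))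
    refine h2.congr' ?_
    obtain ⟨N, hN⟩ := exists_nat_ge |s|
    filter_upwards [Filter.eventually_ge_atTop N, Filter.eventually_gt_atTop 0] with n hn hn0
    have hsn : |s| ≤ n := hN.trans (by exact_mod_cast hn)
    have e : max (min (n : ℝ) (n + s) - max 0 s) 0 = n - |s| := by
      rcases le_total 0 s with h | h
      · rw [abs_of_nonneg h] at hsn ⊢
        rw [min_eq_left (by linarith), max_eq_right h, max_eq_left (by linarith)]
      · rw [abs_of_nonpos h] at hsn ⊢
        rw [min_eq_right (by linarith), max_eq_left h, max_eq_left (by linarith)]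
        ring
    rw [e]
    have : (n : ℂ) ≠ 0 := by exact_mod_cast hn0.ne'
    push_cast
    field_simp

/-- test function -/
noncomputable def Ft (ξ : ℝ) (n : ℕ) (u : ℝ) : ℂ := JJ n u * Complex.exp ((ξ * u : ℝ) * Complex.I)

noncomputable def f0 (c ξ : ℝ) (n : ℕ) (x : ℝ) : ℂ :=
  if 0 < x then (rexp (-(c * Real.log x)) : ℂ) * Ft ξ n (Real.log x) else 0

theorem Ft_meas (ξ : ℝ) (n : ℕ) : Measurable (Ft ξ n) := by
  unfold Ft
  have := JJ_meas n
  fun_prop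

theorem f0_meas (c ξ : ℝ) (n : ℕ) : Measurable (f0 c ξ n) := by
  unfold f0
  have := Ft_meas ξ n
  refine Measurable.ite measurableSet_Ioi (by fun_prop) measurable_const

theorem tr_f0 (c ξ : ℝ) (n : ℕ) : tr c 1 (f0 c ξ n) = Ft ξ n := by
  ext u
  rw [tr, one_mul, f0, if_pos (Real.exp_pos _), Real.log_exp, ← mul_assoc, ← Complex.ofReal_mul,
    ← Real.exp_add]
  simp

theorem tr_f0_neg (c ξ : ℝ) (n : ℕ) : tr c (-1) (f0 c ξ n) = 0 := by
  ext u
  have : ¬ (0 < -1 * rexp u) := by have := Real.exp_pos u; linarith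
  rw [tr, f0, if_neg this]
  simp

theorem Ft_norm (ξ : ℝ) (n : ℕ) : eLpNorm (Ft ξ n) 2 ^ 2 = (n : ℝ≥0∞) := by
  rw [sq_norm]
  have : ∀ u, ‖Ft ξ n u‖ₑ ^ 2 = (Set.Icc (0 : ℝ) n).indicator 1 u := by
    intro u
    have h : ‖Complex.exp ((ξ * u : ℝ) * Complex.I)‖ₑ = 1 := by
      rw [← ofReal_norm, Complex.norm_exp_ofReal_mul_I]; simp
    rw [Ft, enorm_mul, h, mul_one, JJ]
    by_cases hu : u ∈ Set.Icc (0 : ℝ) n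
    · rw [Set.indicator_of_mem hu, Set.indicator_of_mem hu]; simp
    · rw [Set.indicator_of_notMem hu, Set.indicator_of_notMem hu]; simp
  simp_rw [this]
  rw [lintegral_indicator_one measurableSet_Icc]
  simp

theorem f0_norm (a ξ : ℝ) (n : ℕ) :
    eLpNorm (f0 ((a + 1) / 2) ξ n) 2 (weightMeasure a) ^ 2 = (n : ℝ≥0∞) := by
  rw [norm_cv a _ (f0_meas _ _ _), tr_f0, tr_f0_neg, Ft_norm]
  simp

theorem lower_step (a : ℝ) (φ : ℝ → ℂ)
    (T : Lp ℂ 2 (weightMeasure a) →L[ℂ] Lp ℂ 2 (weightMeasure a))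
    (hT : ∀ f : Lp ℂ 2 (weightMeasure a), ⇑(T f) =ᵐ[weightMeasure a] Hphi φ ⇑f) (ξ : ℝ) (n : ℕ) :
    ‖∫ u, JJ n u * ∫ s, JJ n (u - s) *
      (kk φ ((a + 1) / 2) s * Complex.exp (-(ξ * s : ℝ) * Complex.I))‖ ≤ ‖T‖ * n := by
  set c := (a + 1) / 2 with hc
  have hfin : eLpNorm (f0 c ξ n) 2 (weightMeasure a) < ⊤ := by
    refine lt_top_iff_ne_top.2 fun h => ?_
    have := f0_norm a ξ n
    rw [← hc, h] at this
    simp at this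
  have hmem : MemLp (f0 c ξ n) 2 (weightMeasure a) := ⟨(f0_meas _ _ _).aestronglyMeasurable, hfin⟩
  set f := hmem.toLp _ with hf
  have hae : f =ᵐ[weightMeasure a] f0 c ξ n := hmem.coeFn_toLp
  have hTm : Measurable (T f) := (Lp.stronglyMeasurable (T f)).measurable
  have trf : tr c 1 f =ᵐ[volume] Ft ξ n := by
    filter_upwards [(ae_cv a _ hae).1] with u hu
    rw [← tr_f0 c ξ n, tr, tr, hu]
  have hG : tr c 1 (T f) =ᵐ[volume] fun u => ∫ s, Ft ξ n (u - s) * kk φ c s := by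
    filter_upwards [(T_conv (hT f)).1] with u hu
    rw [hu]
    apply integral_congr_ae
    filter_upwards [(quasiMeasurePreserving_sub_left volume u).ae trf] with s hs
    rw [hs]
  have e1 : (fun u => JJ n u * ∫ s, JJ n (u - s) *
      (kk φ c s * Complex.exp (-(ξ * s : ℝ) * Complex.I))) =ᵐ[volume]
      (Set.Icc (0 : ℝ) n).indicator
        fun u => Complex.exp (-(ξ * u : ℝ) * Complex.I) * tr c 1 (T f) u := by
    filter_upwards [hG] with u hu
    by_cases h : u ∈ Set.Icc (0 : ℝ) n
    · rw [Set.indicator_of_mem h, hu, JJ, Set.indicator_of_mem h, Pi.one_apply, one_mul,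
        ← integral_const_mul]
      congr 1 with s
      have : Complex.exp (-(ξ * s : ℝ) * Complex.I) = Complex.exp (-(ξ * u : ℝ) * Complex.I) *
          Complex.exp ((ξ * (u - s) : ℝ) * Complex.I) := by
        rw [← Complex.exp_add]
        congr 1
        push_cast
        ring
      rw [this, Ft]
      ring
    · rw [Set.indicator_of_notMem h, JJ, Set.indicator_of_notMem h, zero_mul]
  rw [integral_congr_ae e1, integral_indicator measurableSet_Icc]
  set D : ℝ≥0∞ := (n : ℝ≥0∞) ^ (1 / 2 : ℝ) with hD
  have hD2 : D ^ 2 = n := by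
    rw [hD, ← ENNReal.rpow_natCast, ← ENNReal.rpow_mul]; norm_num
  have hfn : eLpNorm f 2 (weightMeasure a) = D := by
    have h1 : eLpNorm f 2 (weightMeasure a) ^ 2 = D ^ 2 := by
      rw [eLpNorm_congr_ae hae, hD2, f0_norm]
    exact le_antisymm ((ENNReal.pow_le_pow_left_iff (by norm_num)).1 h1.le)
      ((ENNReal.pow_le_pow_left_iff (by norm_num)).1 h1.ge)
  have hGn : eLpNorm (tr c 1 (T f)) 2 ≤ eLpNorm (T f) 2 (weightMeasure a) := by
    rw [← ENNReal.pow_le_pow_left_iff (n := 2) (by norm_num), norm_cv a _ hTm]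
    exact le_self_add
  have hTn : eLpNorm (T f) 2 (weightMeasure a) ≤ ENNReal.ofReal ‖T‖ * D := by
    rw [← hfn, ← Lp.enorm_def, ← Lp.enorm_def, ← ofReal_norm, ← ofReal_norm,
      ← ENNReal.ofReal_mul (norm_nonneg _)]
    exact ENNReal.ofReal_le_ofReal (T.le_opNorm f)
  have hI : ‖∫ u in Set.Icc (0 : ℝ) n, Complex.exp (-(ξ * u : ℝ) * Complex.I) * tr c 1 (T f) u‖ₑ
      ≤ ENNReal.ofReal (‖T‖ * n) := by
    calc _ ≤ ∫⁻ u in Set.Icc (0 : ℝ) n,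
          ‖Complex.exp (-(ξ * u : ℝ) * Complex.I) * tr c 1 (T f) u‖ₑ :=
          enorm_integral_le_lintegral_enorm _
      _ = ∫⁻ u in Set.Icc (0 : ℝ) n, ‖tr c 1 (T f) u‖ₑ := by
          congr 1 with u
          have h : ‖Complex.exp (-(ξ * u : ℝ) * Complex.I)‖ₑ = 1 := by
            rw [← ofReal_norm, ← Complex.ofReal_neg, Complex.norm_exp_ofReal_mul_I]; simp
          rw [enorm_mul, h, one_mul]
      _ = eLpNorm (tr c 1 (T f)) 1 (volume.restrict (Set.Icc (0 : ℝ) n)) :=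
          eLpNorm_one_eq_lintegral_enorm.symm
      _ ≤ eLpNorm (tr c 1 (T f)) 2 (volume.restrict (Set.Icc (0 : ℝ) n)) * D := by
          have := eLpNorm_le_eLpNorm_mul_rpow_measure_univ
            (μ := volume.restrict (Set.Icc (0 : ℝ) n)) (p := 1) (q := 2) (by norm_num)
            (tr_meas (c := c) (σ := 1) hTm).aestronglyMeasurable
          convert this using 2
          rw [hD, Measure.restrict_apply_univ, Real.volume_Icc]
          norm_num
      _ ≤ (ENNReal.ofReal ‖T‖ * D) * D := by
          gcongr
          exact (eLpNorm_restrict_le _ _ _ _).trans (hGn.trans hTn)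
      _ = _ := by
          rw [mul_assoc, ← sq, hD2, ENNReal.ofReal_mul (norm_nonneg _), ENNReal.ofReal_natCast]
  rw [← ofReal_norm] at hI
  exact (ENNReal.ofReal_le_ofReal_iff (by positivity)).1 hI

theorem kexp_int {k : ℝ → ℂ} (hk : Integrable k) (ξ : ℝ) :
    Integrable fun s : ℝ => k s * Complex.exp (-(ξ * s : ℝ) * Complex.I) := by
  refine hk.mono (hk.1.mul (Continuous.aestronglyMeasurable (by fun_prop))) ?_
  refine Filter.Eventually.of_forall fun s => ?_
  rw [norm_mul, ← Complex.ofReal_neg, Complex.norm_exp_ofReal_mul_I, mul_one]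

theorem lower (a : ℝ) (φ : ℝ → ℂ)
    (hk : Integrable (kk φ ((a + 1) / 2)))
    (T : Lp ℂ 2 (weightMeasure a) →L[ℂ] Lp ℂ 2 (weightMeasure a))
    (hT : ∀ f : Lp ℂ 2 (weightMeasure a), ⇑(T f) =ᵐ[weightMeasure a] Hphi φ ⇑f) (ξ : ℝ) :
    ‖khat φ ((a + 1) / 2) ξ‖ ≤ ‖T‖ := by
  rw [khat_eq]
  have hk' := kexp_int hk ξ
  refine le_of_tendsto (overlap_tendsto hk').norm ?_
  filter_upwards [Filter.eventually_gt_atTop 0] with n hn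
  rw [← fubini_JJ hk', norm_mul, norm_inv, Complex.norm_natCast]
  have hn' : (0 : ℝ) < n := by exact_mod_cast hn
  rw [inv_mul_le_iff₀ hn', mul_comm]
  exact lower_step a φ T hT ξ n

end helpers

/-- For `a > −1` and `φ` measurable with
`∫₀^∞ |φ(t)| t^{(a+1)/2 − 1} dt < ∞`, the operator norm of the Hausdorff operator
on `L²(ℝ, |x|^a)` equals `sup_{ξ ∈ ℝ} |k̂_{a,2}(ξ)|`. -/
theorem stmt7 (a : ℝ) (ha : -1 < a) (φ : ℝ → ℂ) (hφm : Measurable φ)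
    (hφ : IntegrableOn (fun t => ‖φ t‖ * t ^ ((a + 1) / 2 - 1)) (Set.Ioi (0 : ℝ)))
    (T : Lp ℂ 2 (weightMeasure a) →L[ℂ] Lp ℂ 2 (weightMeasure a))
    (hT : ∀ f : Lp ℂ 2 (weightMeasure a), ⇑(T f) =ᵐ[weightMeasure a] Hphi φ ⇑f) :
    ‖T‖ = ⨆ ξ : ℝ, ‖khat φ ((a + 1) / 2) ξ‖ := by
  have hk := kk_integrable φ ((a + 1) / 2) hφm hφ
  have hbdd : BddAbove (Set.range fun ξ : ℝ => ‖khat φ ((a + 1) / 2) ξ‖) := by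
    refine ⟨‖T‖, ?_⟩
    rintro _ ⟨ξ, rfl⟩
    exact lower a φ hk T hT ξ
  apply le_antisymm
  · exact upper a φ hk T hT (Real.iSup_nonneg fun _ => norm_nonneg _) fun ξ => le_ciSup hbdd ξ
  · exact ciSup_le fun ξ => lower a φ hk T hT ξ
end

section
/- Let 1 ≤ p < ∞, a > −1, and let φ : (0,∞) → ℂ be measurable with ∫₀^∞ |φ(t)| t^{(a+1)/p − 1} dt < ∞. Let λ ∈ ℂ lie outside the closure of { k̂_{a,p}(ξ) : ξ ∈ ℝ }. Then there exists a measurable function ψ : (0,∞) → ℂ with ∫₀^∞ |ψ(t)| t^{(a+1)/p − 1} dt < ∞ such that λ·ψ(x) − ∫₀^∞ ψ(x/t) φ(t) t⁻¹ dt = φ(x) for almost every x > 0. -/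
open MeasureTheory

lemma char_real_exp (η : ℝ → ℂ) (hc : Continuous η) (h0 : η 0 = 1)
    (hadd : ∀ a b, η (a + b) = η a * η b) (hn : ∀ a, ‖η a‖ ≤ 1) :
    ∃ ξ : ℝ, ∀ a, η a = Complex.exp (-(Complex.I * ξ * a)) := by
  set F : ℝ → ℂ := fun x => ∫ t in (0:ℝ)..x, η t with hF
  have hFd : ∀ x, HasDerivAt F (η x) x := fun x =>
    intervalIntegral.integral_hasDerivAt_right (hc.intervalIntegrable _ _)
      (hc.stronglyMeasurableAtFilter _ _) hc.continuousAt
  obtain ⟨b, hb⟩ : ∃ b, F b ≠ 0 := by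
    by_contra! h
    have : F = fun _ => 0 := funext h
    have h1 := hFd 0
    rw [this, h0] at h1
    exact one_ne_zero (h1.unique (hasDerivAt_const _ _))
  have key : ∀ x, η x = (F b)⁻¹ * (F (x + b) - F x) := by
    intro x
    have h1 : F (x + b) - F x = ∫ t in x..(x+b), η t :=
      intervalIntegral.integral_interval_sub_left (hc.intervalIntegrable _ _)
        (hc.intervalIntegrable _ _)
    have h2 : ∫ t in x..(x+b), η t = ∫ t in (0:ℝ)..b, η (x + t) := by
      simp
    rw [h1, h2]
    simp_rw [hadd x]
    rw [intervalIntegral.integral_const_mul]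
    change η x = (F b)⁻¹ * (η x * F b)
    field_simp
  have hd0 : ∃ c, HasDerivAt η c 0 := by
    refine ⟨(F b)⁻¹ * (η (0 + b) - η 0), ?_⟩
    have : HasDerivAt (fun x => (F b)⁻¹ * (F (x + b) - F x)) ((F b)⁻¹ * (η (0 + b) - η 0)) 0 :=
      (((hFd (0 + b)).comp_add_const 0 b).sub (hFd 0)).const_mul _
    exact this.congr_of_eventuallyEq (Filter.Eventually.of_forall key)
  obtain ⟨c, hc0⟩ := hd0
  have hd : ∀ x, HasDerivAt η (η x * c) x := by
    intro x
    have h1 : HasDerivAt (fun y => η (y - x)) c x := by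
      have : HasDerivAt η c (x - x) := by simpa using hc0
      exact this.comp_sub_const x x
    have h2 := h1.const_mul (η x)
    refine h2.congr_of_eventuallyEq (Filter.Eventually.of_forall fun y => ?_)
    simp only []
    rw [← hadd]; congr 1; ring
  have hexp : ∀ x : ℝ, η x = Complex.exp (c * x) := by
    have hder : ∀ x : ℝ, HasDerivAt (fun x : ℝ => η x * Complex.exp (-(c * x))) 0 x := by
      intro x
      have h1 : HasDerivAt (fun x : ℝ => -(c * (x:ℂ))) (-(c * 1)) x :=
        ((Complex.ofRealCLM.hasDerivAt (x := x)).const_mul c).neg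
      have := (hd x).mul h1.cexp
      refine this.congr_deriv ?_
      ring
    intro x
    have := is_const_of_deriv_eq_zero (fun x => (hder x).differentiableAt)
      (fun x => (hder x).deriv) x 0
    simp only [h0] at this
    simp at this
    rw [Complex.exp_neg] at this
    have h3 := Complex.exp_ne_zero (c * x)
    field_simp at this
    exact this
  have hre : c.re = 0 := by
    have h1 := hn 1
    have h2 := hn (-1)
    rw [hexp, Complex.norm_exp] at h1 h2
    simp at h1 h2
    linarith
  refine ⟨-c.im, fun a => ?_⟩
  rw [hexp]
  congr 1
  conv_lhs => rw [← Complex.re_add_im c, hre]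
  push_cast; ring


section abs
variable {X : Type*} [NormedAddCommGroup X] [NormedSpace ℂ X] [CompleteSpace X]

lemma isUnit_comm {A : Type*} [NormedCommRing A] [NormedAlgebra ℂ A] [CompleteSpace A]
    (ι : A →ₐ[ℂ] (X →L[ℂ] X)) (hι : ∀ x, ‖ι x‖ = ‖x‖)
    (t : ℝ → A) (h0 : t 0 = 1)
    (hadd : ∀ a b, t (a + b) = t a * t b) (hn : ∀ a, ‖t a‖ ≤ 1)
    (k : ℝ → ℂ) (hk : Integrable k)
    (c : A) (hC : ∀ x, ι c x = ∫ a, k a • ι (t a) x)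
    (hcont : Continuous fun a => t a * c)
    (l : ℂ) (hl0 : l ≠ 0) (hl : ∀ ξ : ℝ, ∫ a, k a * Complex.exp (-(Complex.I * ξ * a)) ≠ l) :
    IsUnit (algebraMap ℂ A l - c) := by
  by_contra hcon
  obtain ⟨χ, hχ⟩ := WeakDual.CharacterSpace.exists_apply_eq_zero hcon
  have hχC : χ c = l := by
    rw [map_sub, AlgHomClass.commutes, sub_eq_zero] at hχ
    exact hχ.symm
  have hχcont : Continuous χ := map_continuous χ
  set η : ℝ → ℂ := fun a => χ (t a) with hηdef
  have hη : ∀ a, χ (t a * c) = η a * l := fun a => by rw [map_mul, hχC]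
  have hηc : Continuous η := by
    have h1 : Continuous fun a => χ (t a * c) * l⁻¹ := (hχcont.comp hcont).mul continuous_const
    refine h1.congr fun a => ?_
    rw [hη]; field_simp
  have h2 : ‖(1 : A)‖ ≤ 1 := by rw [← h0]; exact hn 0
  obtain ⟨ξ, hξ⟩ := char_real_exp η hηc
    (by rw [hηdef]; simp only []; rw [h0, map_one])
    (fun a b => by rw [hηdef]; simp only []; rw [hadd, map_mul])
    (fun a => by
      have h1 : ‖χ (t a)‖ ≤ ‖t a‖ * ‖(1 : A)‖ :=
        spectrum.norm_le_norm_mul_of_mem (AlgHom.apply_mem_spectrum χ (t a))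
      calc _ ≤ _ := h1
        _ ≤ 1 * 1 := mul_le_mul (hn a) h2 (norm_nonneg _) zero_le_one
        _ = 1 := by norm_num)
  apply hl ξ
  have hintA : Integrable (fun a => k a • (t a * c)) := by
    refine Integrable.mono' (hk.norm.mul_const ‖c‖)
      (hk.aestronglyMeasurable.smul hcont.aestronglyMeasurable)
      (Filter.Eventually.of_forall fun a => ?_)
    rw [norm_smul]
    gcongr
    exact (norm_mul_le _ _).trans (by nlinarith [hn a, norm_nonneg c])
  let ιL : A →L[ℂ] (X →L[ℂ] X) := ι.toLinearMap.mkContinuous 1 (fun x => by simp [hι])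
  have hιL : ∀ x, ιL x = ι x := fun x => rfl
  have hinj : Function.Injective ι := by
    rw [injective_iff_map_eq_zero]
    intro x hx
    rw [← norm_eq_zero, ← hι, hx, norm_zero]
  have hsq : c * c = ∫ a, k a • (t a * c) := by
    apply hinj
    rw [← hιL (∫ a, k a • (t a * c)), ← ιL.integral_comp_comm hintA]
    ext x
    rw [ContinuousLinearMap.integral_apply (ιL.integrable_comp hintA)]
    rw [map_mul]
    change ι c (ι c x) = _
    rw [hC]
    congr 1
    ext a
    rw [hιL, map_smul, map_mul]
    rfl
  have h4 : χ (c * c) = ∫ a, χ (k a • (t a * c)) := by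
    rw [hsq]
    exact (ContinuousLinearMap.integral_comp_comm (WeakDual.CharacterSpace.toCLM χ) hintA).symm
  have h5 : ∀ a, χ (k a • (t a * c)) = k a * Complex.exp (-(Complex.I * ξ * a)) * l := fun a => by
    rw [map_smul, hη, hξ, smul_eq_mul]; ring
  simp_rw [h5] at h4
  rw [integral_mul_const, map_mul, hχC] at h4
  exact (mul_right_cancel₀ hl0 h4).symm

lemma isUnit_abstract (τ : ℝ → X →L[ℂ] X) (h0 : τ 0 = 1)
    (hadd : ∀ a b, τ (a + b) = τ a * τ b) (hn : ∀ a, ‖τ a‖ ≤ 1)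
    (k : ℝ → ℂ) (hk : Integrable k)
    (hsc : ∀ x, Continuous fun a => τ a x)
    (C : X →L[ℂ] X) (hC : ∀ x, C x = ∫ a, k a • τ a x)
    (hcont : Continuous fun a => τ a * C)
    (l : ℂ) (hl0 : l ≠ 0) (hl : ∀ ξ : ℝ, ∫ a, k a * Complex.exp (-(Complex.I * ξ * a)) ≠ l) :
    IsUnit (algebraMap ℂ (X →L[ℂ] X) l - C) := by
  set S : Set (X →L[ℂ] X) := Set.range τ with hS
  set S' : Set (X →L[ℂ] X) := S.centralizer with hS'
  have hSS' : S ⊆ S' := by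
    rintro _ ⟨a, rfl⟩ _ ⟨b, rfl⟩
    rw [← hadd, ← hadd, add_comm]
  set A : Subalgebra ℂ (X →L[ℂ] X) := Subalgebra.centralizer ℂ S' with hA
  have hAS' : (A : Set (X →L[ℂ] X)) ⊆ S' := Set.centralizer_subset hSS'
  have hAcl : IsClosed (A : Set (X →L[ℂ] X)) := by
    have : (A : Set (X →L[ℂ] X)) = ⋂ s ∈ S', {y | s * y = y * s} := by
      ext y
      simp only [SetLike.mem_coe, hA, Subalgebra.mem_centralizer_iff, Set.mem_iInter, Set.mem_ofPred_eq]
    rw [this]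
    refine isClosed_biInter fun s _ => isClosed_eq (by fun_prop) (by fun_prop)
  have hτA : ∀ a, τ a ∈ A := fun a => by
    rw [hA, Subalgebra.mem_centralizer_iff]
    intro g hg
    exact (hg (τ a) ⟨a, rfl⟩).symm
  have hint : ∀ x, Integrable (fun a => k a • τ a x) := fun x => by
    refine Integrable.mono' (hk.norm.mul_const ‖x‖)
      (hk.aestronglyMeasurable.smul (hsc x).aestronglyMeasurable)
      (Filter.Eventually.of_forall fun a => ?_)
    rw [norm_smul]
    gcongr
    exact ((τ a).le_opNorm x).trans (by nlinarith [hn a, norm_nonneg x])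
  have hCA : C ∈ A := by
    rw [hA, Subalgebra.mem_centralizer_iff]
    intro g hg
    ext x
    change g (C x) = C (g x)
    rw [hC, hC, ← ContinuousLinearMap.integral_comp_comm _ (hint x)]
    congr 1; ext a
    rw [map_smul]
    congr 1
    have := hg (τ a) ⟨a, rfl⟩
    exact (DFunLike.congr_fun this x).symm
  let _ : NormedCommRing A :=
    { (inferInstance : NormedRing A) with
      mul_comm := fun x y => Subtype.ext (((hAS' y.2 |> fun h => x.2 _ h)).symm) }
  have : CompleteSpace A := hAcl.completeSpace_coe
  let cA : A := ⟨C, hCA⟩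
  let tA : ℝ → A := fun a => ⟨τ a, hτA a⟩
  have hu : IsUnit (algebraMap ℂ A l - cA) :=
    isUnit_comm A.val (fun x => rfl) tA (Subtype.ext h0) (fun a b => Subtype.ext (hadd a b))
      hn k hk cA hC (Continuous.subtype_mk hcont _) l hl0 hl
  exact hu.map A.val
end abs

section abs2
variable {X : Type*} [NormedAddCommGroup X] [NormedSpace ℂ X] [CompleteSpace X]

lemma exists_convOp (τ : ℝ → X →L[ℂ] X) (hn : ∀ a, ‖τ a‖ ≤ 1)
    (k : ℝ → ℂ) (hk : Integrable k)
    (hsc : ∀ x, Continuous fun a => τ a x) :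
    (∀ x, Integrable (fun a => k a • τ a x)) ∧
    ∃ C : X →L[ℂ] X, (∀ x, C x = ∫ a, k a • τ a x) ∧ ‖C‖ ≤ ∫ a, ‖k a‖ := by
  have hb : ∀ x a, ‖k a • τ a x‖ ≤ ‖k a‖ * ‖x‖ := fun x a => by
    rw [norm_smul]
    gcongr
    exact ((τ a).le_opNorm x).trans (by nlinarith [hn a, norm_nonneg x])
  have hint : ∀ x, Integrable (fun a => k a • τ a x) := fun x =>
    Integrable.mono' (hk.norm.mul_const ‖x‖)
      (hk.aestronglyMeasurable.smul (hsc x).aestronglyMeasurable)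
      (Filter.Eventually.of_forall (hb x))
  refine ⟨hint, ?_⟩
  let L : X →ₗ[ℂ] X :=
    { toFun := fun x => ∫ a, k a • τ a x
      map_add' := fun x y => by
        rw [← integral_add (hint x) (hint y)]
        simp only [map_add, smul_add]
      map_smul' := fun r x => by
        simp only [RingHom.id_apply]
        rw [← integral_smul]
        congr 1; ext a
        rw [map_smul, smul_comm] }
  have hL : ∀ x, ‖L x‖ ≤ (∫ a, ‖k a‖) * ‖x‖ := fun x => by
    rw [← integral_mul_const]
    exact norm_integral_le_of_norm_le (hk.norm.mul_const ‖x‖) (Filter.Eventually.of_forall (hb x))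
  exact ⟨L.mkContinuous _ hL, fun x => rfl,
    L.mkContinuous_norm_le (integral_nonneg fun a => norm_nonneg _) hL⟩

lemma convOp_cont (τ : ℝ → X →L[ℂ] X) 
    (hadd : ∀ a b, τ (a + b) = τ a * τ b) (hn : ∀ a, ‖τ a‖ ≤ 1)
    (k : ℝ → ℂ) (hk : Integrable k)
    (hsc : ∀ x, Continuous fun a => τ a x)
    (hkc : ∀ b₀ : ℝ, Filter.Tendsto (fun b => ∫ a, ‖k (a - b) - k (a - b₀)‖) (nhds b₀) (nhds 0))
    (C : X →L[ℂ] X) (hC : ∀ x, C x = ∫ a, k a • τ a x) :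
    Continuous fun a => τ a * C := by
  have hint := (exists_convOp τ hn k hk hsc).1
  rw [continuous_iff_continuousAt]
  intro b₀
  rw [ContinuousAt, tendsto_iff_norm_sub_tendsto_zero]
  refine squeeze_zero (fun _ => norm_nonneg _) (fun b => ?_) (hkc b₀)
  have hk' : ∀ b, Integrable fun a => k (a - b) := fun b => hk.comp_sub_right b
  obtain ⟨-, D, hD, hDn⟩ := exists_convOp τ hn (fun a => k (a - b) - k (a - b₀))
    ((hk' b).sub (hk' b₀)) hsc
  have key : ∀ b x, (τ b * C) x = ∫ a, k (a - b) • τ a x := fun b x => by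
    change τ b (C x) = _
    rw [hC, ← (τ b).integral_comp_comm (hint x),
      ← integral_sub_right_eq_self (fun a => (τ b) (k a • (τ a) x)) b]
    congr 1; ext a
    rw [map_smul]
    congr 1
    change (τ b * τ (a - b)) x = _
    rw [← hadd]; congr 2; ring
  have : τ b * C - τ b₀ * C = D := by
    ext x
    rw [sub_apply, key, key, hD, ← integral_sub
      ((exists_convOp τ hn _ (hk' b) hsc).1 x) ((exists_convOp τ hn _ (hk' b₀) hsc).1 x)]
    simp only [sub_smul]
  rw [this]
  exact hDn
end abs2

section L1
noncomputable def trL1 (a : ℝ) : Lp ℂ 1 (volume : Measure ℝ) →L[ℂ] Lp ℂ 1 (volume : Measure ℝ) :=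
  (Lp.compMeasurePreservingₗᵢ ℂ (fun x : ℝ => x - a)
    (measurePreserving_sub_right volume a)).toContinuousLinearMap

lemma trL1_ae (a : ℝ) (f : Lp ℂ 1 (volume : Measure ℝ)) :
    trL1 a f =ᵐ[volume] fun x => f (x - a) :=
  Lp.coeFn_compMeasurePreserving f (measurePreserving_sub_right volume a)

lemma trL1_zero : trL1 0 = 1 := by
  ext1 f
  apply Lp.ext
  filter_upwards [trL1_ae 0 f] with x hx
  rw [hx, sub_zero]; rfl

lemma trL1_add (a b : ℝ) : trL1 (a + b) = trL1 a * trL1 b := by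
  ext1 f
  apply Lp.ext
  change _ =ᵐ[volume] trL1 a (trL1 b f)
  filter_upwards [trL1_ae (a + b) f, trL1_ae a (trL1 b f),
    (measurePreserving_sub_right volume a).quasiMeasurePreserving.ae (trL1_ae b f)] with x h1 h2 h3
  rw [h1, h2, h3]
  congr 1; ring

lemma trL1_norm (a : ℝ) : ‖trL1 a‖ ≤ 1 :=
  LinearIsometry.norm_toContinuousLinearMap_le _

lemma trL1_cont (f : Lp ℂ 1 (volume : Measure ℝ)) : Continuous fun a => trL1 a f := by
  let g : C(ℝ, C(ℝ, ℝ)) :=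
    (ContinuousMap.mk (fun q : ℝ × ℝ => q.2 - q.1) (by fun_prop)).curry
  exact (continuous_const (y := f)).compMeasurePreservingLp g.continuous
    (fun a => measurePreserving_sub_right volume a) ENNReal.one_ne_top

lemma L1_translation_cont (k : ℝ → ℂ) (hk : Integrable k) (b₀ : ℝ) :
    Filter.Tendsto (fun b => ∫ a, ‖k (a - b) - k (a - b₀)‖) (nhds b₀) (nhds 0) := by
  have h := (trL1_cont (hk.toL1 k)).tendsto b₀
  rw [tendsto_iff_norm_sub_tendsto_zero] at h
  refine h.congr fun b => ?_
  rw [L1.norm_eq_integral_norm]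
  apply integral_congr_ae
  have hK : ∀ b : ℝ, ∀ᵐ a, (hk.toL1 k) (a - b) = k (a - b) := fun b =>
    (measurePreserving_sub_right volume b).quasiMeasurePreserving.ae hk.coeFn_toL1
  filter_upwards [Lp.coeFn_sub (trL1 b (hk.toL1 k)) (trL1 b₀ (hk.toL1 k)),
    trL1_ae b (hk.toL1 k), trL1_ae b₀ (hk.toL1 k), hK b, hK b₀] with x h1 h2 h3 h4 h5
  rw [h1, Pi.sub_apply, h2, h3, h4, h5]

lemma conv_ae (k : ℝ → ℂ) (hk : Integrable k) (g : Lp ℂ 1 (volume : Measure ℝ)) :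
    (∫ a, k a • trL1 a g : Lp ℂ 1 (volume : Measure ℝ)) =ᵐ[volume]
      fun x => ∫ a, k a * g (x - a) := by
  have hg : Integrable g := L1.integrable_coeFn g
  have hint := (exists_convOp trL1 trL1_norm k hk trL1_cont).1 g
  have hprod : Integrable (fun p : ℝ × ℝ => k p.2 * g (p.1 - p.2)) (volume.prod volume) :=
    hk.convolution_integrand (ContinuousLinearMap.mul ℂ ℂ) hg
  refine Integrable.ae_eq_of_forall_setIntegral_eq _ _ (L1.integrable_coeFn _)
    hprod.integral_prod_left ?_
  intro s hs _
  let J : Lp ℂ 1 (volume : Measure ℝ) →L[ℝ] ℂ :=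
    (L1.integralCLM).comp (LpToLpRestrictCLM ℝ ℂ ℝ volume 1 s)
  have hJ : ∀ f : Lp ℂ 1 (volume : Measure ℝ), J f = ∫ x in s, f x := fun f => by
    change L1.integralCLM (LpToLpRestrictCLM ℝ ℂ ℝ volume 1 s f) = _
    rw [← L1.integral_eq, L1.integral_eq_integral]
    exact integral_congr_ae (LpToLpRestrictCLM_coeFn ℝ s f)
  rw [← hJ, ← J.integral_comp_comm hint]
  have hprod' : Integrable (Function.uncurry fun x a => k a * g (x - a))
      ((volume.restrict s).prod volume) := by
    have := hprod.restrict (s := s ×ˢ Set.univ)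
    rw [← Measure.prod_restrict, Measure.restrict_univ] at this
    exact this
  rw [integral_integral_swap hprod']
  congr 1; ext a
  rw [hJ]
  apply integral_congr_ae
  apply ae_restrict_of_ae
  filter_upwards [Lp.coeFn_smul (k a) (trL1 a g), trL1_ae a g] with x h1 h2
  rw [h1, Pi.smul_apply, h2, smul_eq_mul]

lemma wiener_L1 (k : ℝ → ℂ) (hk : Integrable k) (l : ℂ)
    (hl : l ∉ closure (Set.range fun ξ : ℝ => ∫ a, k a * Complex.exp (-(Complex.I * ξ * a)))) :
    ∃ g : ℝ → ℂ, Measurable g ∧ Integrable g ∧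
      ∀ᵐ x, l * g x - ∫ a, k a * g (x - a) = k x := by
  have hl0 : l ≠ 0 := by
    rintro rfl
    apply hl
    have h1 := (Real.tendsto_integral_exp_smul_cocompact k)
    have h2 : Filter.Tendsto (fun ξ : ℝ => (2 * Real.pi)⁻¹ * ξ) (Filter.cocompact ℝ) (Filter.cocompact ℝ) :=
      (Homeomorph.mulLeft₀ ((2 * Real.pi)⁻¹) (by positivity)).isClosedEmbedding.tendsto_cocompact
    have h3 := h1.comp h2
    refine mem_closure_of_tendsto h3 (Filter.Eventually.of_forall fun ξ => ⟨ξ, ?_⟩)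
    simp only [Function.comp]
    congr 1; ext a
    rw [Circle.smul_def, Real.fourierChar_apply, smul_eq_mul, mul_comm]
    congr 2
    push_cast
    field_simp
  obtain ⟨-, C, hC, -⟩ := exists_convOp trL1 trL1_norm k hk trL1_cont
  have hu := isUnit_abstract trL1 trL1_zero trL1_add trL1_norm k hk trL1_cont C hC
    (convOp_cont trL1 trL1_add trL1_norm k hk trL1_cont (L1_translation_cont k hk) C hC)
    l hl0 (fun ξ h => hl (subset_closure ⟨ξ, h⟩))
  obtain ⟨u, hu⟩ := hu
  set G := (↑u⁻¹ : Lp ℂ 1 (volume : Measure ℝ) →L[ℂ] Lp ℂ 1 (volume : Measure ℝ)) (hk.toL1 k) with hG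
  have hGeq : l • G - C G = hk.toL1 k := by
    have h1 : (u.1 * (↑u⁻¹)) (hk.toL1 k) = hk.toL1 k := by
      rw [Units.mul_inv]; rfl
    have h2 : u.1 G = hk.toL1 k := h1
    rw [hu] at h2
    rw [← h2]
    rw [sub_apply, Algebra.algebraMap_eq_smul_one]
    rfl
  have hGm : StronglyMeasurable G := Lp.stronglyMeasurable G
  refine ⟨G, hGm.measurable, L1.integrable_coeFn G, ?_⟩
  have h3 : C G =ᵐ[volume] fun x => ∫ a, k a * G (x - a) := by
    rw [hC]; exact conv_ae k hk G
  have h4 := Lp.coeFn_sub (l • G) (C G)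
  rw [hGeq] at h4
  filter_upwards [h3, h4, Lp.coeFn_smul l G, hk.coeFn_toL1] with x h3 h4 h5 h6
  rw [← h3, ← h6, h4, Pi.sub_apply, h5, Pi.smul_apply, smul_eq_mul]
end L1

section chg
variable {E : Type*} [NormedAddCommGroup E] [NormedSpace ℝ E]

lemma exp_image_univ : Real.exp '' Set.univ = Set.Ioi 0 := by
  rw [Set.image_univ, Real.range_exp]

lemma integrableOn_exp (F : ℝ → E) :
    IntegrableOn F (Set.Ioi 0) ↔ Integrable (fun s => Real.exp s • F (Real.exp s)) := by
  have := integrableOn_image_iff_integrableOn_abs_deriv_smul (s := Set.univ) (f := Real.exp)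
    (f' := Real.exp) MeasurableSet.univ (fun x _ => (Real.hasDerivAt_exp x).hasDerivWithinAt)
    Real.exp_injective.injOn F
  rw [exp_image_univ, integrableOn_univ] at this
  simpa only [Real.abs_exp] using this

lemma integral_exp_change (F : ℝ → E) :
    ∫ t in Set.Ioi (0:ℝ), F t = ∫ s, Real.exp s • F (Real.exp s) := by
  have := integral_image_eq_integral_abs_deriv_smul (s := Set.univ) (f := Real.exp)
    (f' := Real.exp) MeasurableSet.univ (fun x _ => (Real.hasDerivAt_exp x).hasDerivWithinAt)
    Real.exp_injective.injOn F
  rw [exp_image_univ, setIntegral_univ] at this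
  simpa only [Real.abs_exp] using this

lemma ae_Ioi_of_ae_exp (P : ℝ → Prop) (h : ∀ᵐ s : ℝ, P (Real.exp s)) :
    ∀ᵐ x ∂(volume.restrict (Set.Ioi (0 : ℝ))), P x := by
  rw [ae_restrict_iff' measurableSet_Ioi, ae_iff]
  rw [ae_iff] at h
  refine measure_mono_null ?_ (addHaar_image_eq_zero_of_differentiableOn_of_addHaar_eq_zero volume
    (f := Real.exp) Real.differentiable_exp.differentiableOn h)
  intro x hx
  simp only [Set.mem_ofPred_eq, Classical.not_imp] at hx
  refine ⟨Real.log x, ?_, Real.exp_log hx.1⟩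
  simp only [Set.mem_ofPred_eq]
  rw [Real.exp_log hx.1]
  exact hx.2
end chg

/-- For `1 ≤ p < ∞`, `a > −1`, `φ` measurable with
`∫₀^∞ |φ(t)| t^{(a+1)/p − 1} dt < ∞`, and `l ∈ ℂ` outside the closure of
`{ k̂_{a,p}(ξ) : ξ ∈ ℝ }`, there is a measurable `ψ` with
`∫₀^∞ |ψ(t)| t^{(a+1)/p − 1} dt < ∞` and `l·ψ(x) − (H_φ ψ)(x) = φ(x)` for a.e. `x > 0`. -/
theorem stmt8 (p a : ℝ) (hp : 1 ≤ p) (ha : -1 < a) (φ : ℝ → ℂ) (hφm : Measurable φ)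
    (hφ : IntegrableOn (fun t => ‖φ t‖ * t ^ ((a + 1) / p - 1)) (Set.Ioi (0 : ℝ)))
    (l : ℂ) (hl : l ∉ closure (Set.range (khat φ ((a + 1) / p)))) :
    ∃ ψ : ℝ → ℂ, Measurable ψ ∧
      IntegrableOn (fun t => ‖ψ t‖ * t ^ ((a + 1) / p - 1)) (Set.Ioi (0 : ℝ)) ∧
      ∀ᵐ x ∂(volume.restrict (Set.Ioi (0 : ℝ))), l * ψ x - Hphi φ ψ x = φ x := by
  generalize (a + 1) / p = c at *
  set k : ℝ → ℂ := fun s => (Real.exp (c * s) : ℂ) * φ (Real.exp s) with hkdef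
  have hpow : ∀ s : ℝ, Real.exp s * Real.exp s ^ (c - 1) = Real.exp (c * s) := fun s => by
    rw [← Real.exp_mul, ← Real.exp_add]; congr 1; ring
  have hkm : Measurable k := by
    have : Measurable fun s => φ (Real.exp s) := hφm.comp Real.measurable_exp
    fun_prop
  have hk : Integrable k := by
    rw [integrableOn_exp] at hφ
    rw [← integrable_norm_iff hkm.aestronglyMeasurable]
    refine hφ.congr (Filter.Eventually.of_forall fun s => ?_)
    simp only [hkdef, smul_eq_mul, norm_mul, Complex.norm_real, Real.norm_eq_abs, Real.abs_exp]
    rw [← hpow s]; ring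
  have hkhat : khat φ c = fun ξ : ℝ => ∫ s, k s * Complex.exp (-(Complex.I * ξ * s)) := by
    ext ξ
    rw [khat, integral_exp_change]
    congr 1; ext s
    rw [Complex.real_smul, hkdef]
    simp only []
    rw [Complex.cpow_def_of_ne_zero (by exact_mod_cast (Real.exp_pos s).ne'),
      ← Complex.ofReal_log (Real.exp_pos s).le, Real.log_exp]
    have : Complex.exp (s * (c - 1 - Complex.I * ξ)) =
        Complex.exp (c * s) * Complex.exp (-(Complex.I * ξ * s)) * Complex.exp (-s) := by
      rw [← Complex.exp_add, ← Complex.exp_add]; congr 1; ring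
    rw [this, Complex.exp_neg (s : ℂ)]
    push_cast
    have := Complex.exp_ne_zero (s : ℂ)
    field_simp
  rw [hkhat] at hl
  obtain ⟨g, hgm, hgi, hg⟩ := wiener_L1 k hk l hl
  refine ⟨fun x => (Real.exp (-(c * Real.log x)) : ℂ) * g (Real.log x), ?_, ?_, ?_⟩
  · have : Measurable fun x => g (Real.log x) := hgm.comp Real.measurable_log
    have h2 := Real.measurable_log
    fun_prop
  · rw [integrableOn_exp]
    refine hgi.norm.congr (Filter.Eventually.of_forall fun s => ?_)
    simp only [smul_eq_mul, norm_mul, Complex.norm_real, Real.norm_eq_abs, Real.abs_exp,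
      Real.log_exp]
    have h1 := hpow s
    have h2 : Real.exp (-(c * s)) * Real.exp (c * s) = 1 := by rw [← Real.exp_add]; simp
    calc ‖g s‖ = (Real.exp (-(c * s)) * Real.exp (c * s)) * ‖g s‖ := by rw [h2, one_mul]
      _ = _ := by rw [← h1]; ring
  · apply ae_Ioi_of_ae_exp
    filter_upwards [hg] with s hs
    have hH : Hphi φ (fun x => (Real.exp (-(c * Real.log x)) : ℂ) * g (Real.log x)) (Real.exp s)
        = (Real.exp (-(c * s)) : ℂ) * ∫ t, k t * g (s - t) := by
      rw [Hphi, integral_exp_change, ← integral_const_mul]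
      congr 1; ext t
      rw [← Real.exp_sub, Real.log_exp, Complex.real_smul, hkdef]
      simp only []
      have : Real.exp (-(c * (s - t))) = Real.exp (-(c * s)) * Real.exp (c * t) := by
        rw [← Real.exp_add]; congr 1; ring
      rw [this]
      have h3 : ((Real.exp t : ℝ) : ℂ) ≠ 0 := by exact_mod_cast (Real.exp_pos t).ne'
      rw [Complex.ofReal_mul]
      field_simp
    rw [hH, Real.log_exp]
    have h2 : (Real.exp (-(c * s)) : ℂ) * (Real.exp (c * s) : ℂ) = 1 := by
      rw [← Complex.ofReal_mul, ← Real.exp_add]; simp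
    calc _ = (Real.exp (-(c * s)) : ℂ) * (l * g s - ∫ t, k t * g (s - t)) := by ring
      _ = (Real.exp (-(c * s)) : ℂ) * (Real.exp (c * s) : ℂ) * φ (Real.exp s) := by
        rw [hs, mul_assoc]
      _ = _ := by rw [h2, one_mul]
end
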